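/- arXiv:2202.07150 — 3 statements merged into one kernel-verified Lean document; each statement's English description precedes it below -/
import Mathlib

section
/- Let M and N be positive integers, T̄ = M + N, and let O be a uniformly random (Haar-distributed) T̄×T̄ orthogonal matrix of determinant 1, written in block form O = [[A, B],[C, D]] with A of size M×M and D of size N×N. Then almost surely 1_N + D is invertible, and the matrix Õ := A − B(1_N + D)^{−1}C is a uniformly random (Haar-distributed) M×M orthogonal matrix of determinant 1. Moreover, the random matrices Õ and B(1_N + D)^{−1} are independent. -/
open MeasureTheory ProbabilityTheory Matrix

noncomputable section

instance matMS (m n : Type*) : MeasurableSpace (Matrix m n ℝ) :=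
  (inferInstance : MeasurableSpace (m → n → ℝ))

/-- `ν` is the Haar (uniform) probability measure on the special orthogonal group. -/
def IsHaarSO (n : Type*) [Fintype n] [DecidableEq n] (ν : Measure (Matrix n n ℝ)) : Prop :=
  IsProbabilityMeasure ν ∧ (∀ᵐ O ∂ν, Oᵀ * O = 1 ∧ O.det = 1) ∧
    ∀ U : Matrix n n ℝ, Uᵀ * U = 1 → U.det = 1 → ν.map (fun O => U * O) = ν

/-!
With `W = (1 + D)⁻¹ C`, the orthogonal matrix `O` maps `[1; -W]` to `[Õ; W]`, so `Õ` is orthogonal;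
a Schur complement gives `det Õ = 1`. Multiplying `O` by `diag(U, 1)` multiplies `Õ` by `U`, and
on the right it also fixes `B (1 + D)⁻¹`. As the law of `O` is invariant on both sides, `Õ` is Haar
distributed, and it stays so conditionally on `B (1 + D)⁻¹`.

Invertibility of `1 + D` is proved by induction on the size of `D`: enlarging `D` by one index `i`
multiplies `det (1 + D)` by `1 + Õ i i`, where `Õ` is formed from the smaller block. A Haar matrix
almost surely has no diagonal entry `-1`: such an entry forces `O eᵢ = -eᵢ`, and `-eᵢ` has an
infinite orbit, all of whose points are equally likely values of `O eᵢ`.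
-/

section SpecialOrthogonalGroup

variable {R : Type*} [CommRing R] {m n : Type*} [Fintype m] [DecidableEq m] [Fintype n]
  [DecidableEq n]

theorem mem_specialOrthogonalGroup_iff_transpose_mul_self {A : Matrix n n R} :
    A ∈ specialOrthogonalGroup n R ↔ Aᵀ * A = 1 ∧ A.det = 1 := by
  rw [mem_specialOrthogonalGroup_iff, mem_orthogonalGroup_iff']

theorem transpose_mem_specialOrthogonalGroup {A : Matrix n n R}
    (hA : A ∈ specialOrthogonalGroup n R) : Aᵀ ∈ specialOrthogonalGroup n R := by
  rw [mem_specialOrthogonalGroup_iff_transpose_mul_self] at hA ⊢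
  exact ⟨by rw [transpose_transpose, mul_eq_one_comm.1 hA.1], by rw [det_transpose, hA.2]⟩

theorem submatrix_equiv_mem_specialOrthogonalGroup {A : Matrix n n R}
    (hA : A ∈ specialOrthogonalGroup n R) (e : m ≃ n) :
    A.submatrix e e ∈ specialOrthogonalGroup m R := by
  rw [mem_specialOrthogonalGroup_iff_transpose_mul_self] at hA ⊢
  rw [transpose_submatrix, submatrix_mul_equiv, hA.1, submatrix_one_equiv,
    det_submatrix_equiv_self]
  exact ⟨rfl, hA.2⟩

theorem fromBlocks_one_mem_specialOrthogonalGroup {U : Matrix m m R}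
    (hU : U ∈ specialOrthogonalGroup m R) :
    fromBlocks U 0 0 (1 : Matrix n n R) ∈ specialOrthogonalGroup (m ⊕ n) R := by
  rw [mem_specialOrthogonalGroup_iff_transpose_mul_self] at hU ⊢
  simp [fromBlocks_transpose, fromBlocks_multiply, hU]

theorem mulVec_eq_neg_of_dotProduct_mulVec_eq_neg [LinearOrder R] [IsStrictOrderedRing R]
    {A : Matrix n n R} (hA : Aᵀ * A = 1) {v : n → R} (hv : v ⬝ᵥ A *ᵥ v = -(v ⬝ᵥ v)) :
    A *ᵥ v = -v := by
  have norm_eq : A *ᵥ v ⬝ᵥ A *ᵥ v = v ⬝ᵥ v := by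
    rw [dotProduct_mulVec, ← mulVec_transpose, mulVec_mulVec, hA, one_mulVec]
  have sum_eq_zero : (A *ᵥ v + v) ⬝ᵥ (A *ᵥ v + v) = 0 := by
    rw [add_dotProduct, dotProduct_add, dotProduct_add, norm_eq, dotProduct_comm (A *ᵥ v) v,
      hv]
    ring
  exact eq_neg_of_add_eq_zero_left (dotProduct_self_eq_zero.1 sum_eq_zero)

end SpecialOrthogonalGroup

section Householder

variable {K : Type*} [Field K] {n : Type*} [Fintype n] [DecidableEq n]

/-- The Householder matrix of the reflection in the hyperplane orthogonal to `v`; the vector `v`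
need not be normalized. It is the identity when `v ⬝ᵥ v = 0`. -/
def householder (v : n → K) : Matrix n n K := 1 - (2 / (v ⬝ᵥ v)) • vecMulVec v v

theorem householder_mulVec (v x : n → K) :
    householder v *ᵥ x = x - (2 / (v ⬝ᵥ v) * (v ⬝ᵥ x)) • v := by
  simp [householder, sub_mulVec, smul_mulVec, vecMulVec_mulVec, smul_smul]

theorem transpose_householder (v : n → K) : (householder v)ᵀ = householder v := by
  simp [householder, transpose_vecMulVec]

theorem householder_mul_self {v : n → K} (hv : v ⬝ᵥ v ≠ 0) :
    householder v * householder v = 1 := by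
  refine ext_of_mulVec_single fun i => ?_
  rw [← mulVec_mulVec, householder_mulVec v (_ *ᵥ _), householder_mulVec, one_mulVec,
    dotProduct_sub, dotProduct_smul, smul_eq_mul, sub_sub, ← add_smul]
  have coeff_eq_zero (a : K) :
      2 / (v ⬝ᵥ v) * a + 2 / (v ⬝ᵥ v) * (a - 2 / (v ⬝ᵥ v) * a * (v ⬝ᵥ v)) = 0 := by
    field_simp
    ring
  rw [coeff_eq_zero, zero_smul, sub_zero]

theorem det_householder {v : n → K} (hv : v ⬝ᵥ v ≠ 0) : (householder v).det = -1 := by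
  have rank_one : householder v
      = 1 + replicateCol Unit v * replicateRow Unit (-(2 / (v ⬝ᵥ v)) • v) := by
    rw [← vecMulVec_eq, vecMulVec_smul, householder, sub_eq_add_neg, neg_smul]
  rw [rank_one, det_one_add_replicateCol_mul_replicateRow, smul_dotProduct, smul_eq_mul]
  field_simp
  norm_num

theorem householder_mul_householder_mem_specialOrthogonalGroup {v w : n → K} (hv : v ⬝ᵥ v ≠ 0)
    (hw : w ⬝ᵥ w ≠ 0) : householder v * householder w ∈ specialOrthogonalGroup n K := by
  rw [mem_specialOrthogonalGroup_iff_transpose_mul_self]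
  constructor
  · rw [transpose_mul, transpose_householder, transpose_householder, Matrix.mul_assoc,
      ← Matrix.mul_assoc (householder v), householder_mul_self hv, Matrix.one_mul,
      householder_mul_self hw]
  · rw [det_mul, det_householder hv, det_householder hw, neg_mul_neg, one_mul]

theorem infinite_image_mulVec_single [LinearOrder K] [IsStrictOrderedRing K] [Nontrivial n] (i : n)
    {c : K} (hc : c ≠ 0) :
    ((fun U : Matrix n n K => U *ᵥ Pi.single i c) '' specialOrthogonalGroup n K).Infinite := by
  obtain ⟨j, hji⟩ := exists_ne i
  let w : n → K := Pi.single j 1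
  let v (t : ℕ) : n → K := Pi.single i 1 + (t : K) • w
  have hw : w ⬝ᵥ w ≠ 0 := by simp [w]
  have hvv (t : ℕ) : v t ⬝ᵥ v t = 1 + (t : K) ^ 2 := by
    simp [v, w, hji, hji.symm, sq]
  have hv (t : ℕ) : v t ⬝ᵥ v t ≠ 0 := by
    rw [hvv]
    positivity
  have coord_eq (t : ℕ) : ((householder (v t) * householder w) *ᵥ Pi.single i c) i
      = c - 2 / (1 + (t : K) ^ 2) * c := by
    have fixed : householder w *ᵥ Pi.single i c = Pi.single i c := by
      rw [householder_mulVec]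
      simp [w, hji]
    rw [← mulVec_mulVec, fixed, householder_mulVec, hvv]
    simp [v, w, hji.symm]
  refine Set.infinite_of_injective_forall_mem
    (f := fun t : ℕ => (householder (v t) * householder w) *ᵥ Pi.single i c) ?_ fun t =>
      ⟨_, householder_mul_householder_mem_specialOrthogonalGroup (hv t) hw, rfl⟩
  intro s t hst
  have h := congrFun hst i
  simp only [coord_eq, sub_right_inj, mul_eq_mul_right_iff, hc, or_false] at h
  have hsq : (s : K) ^ 2 = (t : K) ^ 2 := by
    have hs : (1 + (s : K) ^ 2) ≠ 0 := by positivity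
    have ht : (1 + (t : K) ^ 2) ≠ 0 := by positivity
    field_simp at h
    linarith
  exact_mod_cast (sq_eq_sq₀ s.cast_nonneg t.cast_nonneg).1 hsq

end Householder

section BlockProjection

variable {R : Type*} [CommRing R] {k m n : Type*} [Fintype n] [DecidableEq n]

/-- The matrix `B (1 + D)⁻¹` attached to `O = [[A, B], [C, D]]`. -/
def blockGain (O : Matrix (m ⊕ n) (m ⊕ n) R) : Matrix m n R :=
  O.toBlocks₁₂ * (1 + O.toBlocks₂₂)⁻¹

/-- The matrix `Õ = A - B (1 + D)⁻¹ C` attached to `O = [[A, B], [C, D]]`. -/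
def blockProjection (O : Matrix (m ⊕ n) (m ⊕ n) R) : Matrix m m R :=
  O.toBlocks₁₁ - blockGain O * O.toBlocks₂₁

theorem blockProjection_fromBlocks (A : Matrix m m R) (B : Matrix m n R) (C : Matrix n m R)
    (D : Matrix n n R) :
    blockProjection (fromBlocks A B C D) = A - B * (1 + D)⁻¹ * C := rfl

theorem det_one_add_submatrix_sumMap [Fintype k] [DecidableEq k] {O : Matrix (m ⊕ n) (m ⊕ n) R}
    (hO : IsUnit (1 + O.toBlocks₂₂)) (f : k → m) :
    (1 + O.submatrix (Sum.map f id) (Sum.map f id)).det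
      = (1 + O.toBlocks₂₂).det * (1 + (blockProjection O).submatrix f f).det := by
  have := hO.invertible
  have block_form : 1 + O.submatrix (Sum.map f id) (Sum.map f id)
      = fromBlocks (1 + O.toBlocks₁₁.submatrix f f) (O.toBlocks₁₂.submatrix f id)
          (O.toBlocks₂₁.submatrix id f) (1 + O.toBlocks₂₂) := by
    ext (_ | _) (_ | _) <;> simp [toBlocks₁₁, toBlocks₁₂, toBlocks₂₁, toBlocks₂₂, one_apply]
  rw [block_form, det_fromBlocks₂₂, invOf_eq_nonsing_inv, add_sub_assoc]
  rfl

variable [Fintype m]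

theorem blockProjection_fromBlocks_one_mul (U : Matrix m m R) (O : Matrix (m ⊕ n) (m ⊕ n) R) :
    blockProjection (fromBlocks U 0 0 1 * O) = U * blockProjection O := by
  rw [← fromBlocks_toBlocks O, fromBlocks_multiply]
  simp [blockProjection_fromBlocks, Matrix.mul_sub, Matrix.mul_assoc]

theorem blockProjection_mul_fromBlocks_one (O : Matrix (m ⊕ n) (m ⊕ n) R) (U : Matrix m m R) :
    blockProjection (O * fromBlocks U 0 0 1) = blockProjection O * U := by
  rw [← fromBlocks_toBlocks O, fromBlocks_multiply]
  simp [blockProjection_fromBlocks, Matrix.sub_mul, Matrix.mul_assoc]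

theorem blockGain_mul_fromBlocks_one (O : Matrix (m ⊕ n) (m ⊕ n) R) (U : Matrix m m R) :
    blockGain (O * fromBlocks U 0 0 1) = blockGain O := by
  rw [← fromBlocks_toBlocks O, fromBlocks_multiply]
  simp [blockGain]

variable [DecidableEq m] {O : Matrix (m ⊕ n) (m ⊕ n) R}

-- Comparing the Gram matrices of `[1; -W]` and of its image `[Õ; W]` gives
-- `1 + Wᵀ W = Õᵀ Õ + Wᵀ W`.
theorem transpose_blockProjection_mul_self (hO : Oᵀ * O = 1) (hD : IsUnit (1 + O.toBlocks₂₂)) :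
    (blockProjection O)ᵀ * blockProjection O = 1 := by
  obtain ⟨A, B, C, D, rfl⟩ : ∃ A B C D, O = fromBlocks A B C D :=
    ⟨_, _, _, _, (fromBlocks_toBlocks O).symm⟩
  rw [toBlocks_fromBlocks₂₂] at hD
  rw [blockProjection_fromBlocks, Matrix.mul_assoc B]
  set W : Matrix n m R := (1 + D)⁻¹ * C
  have C_eq : C = W + D * W := by
    have := mul_nonsing_inv_cancel_left _ C ((isUnit_iff_isUnit_det _).1 hD)
    rwa [Matrix.add_mul, Matrix.one_mul, eq_comm] at this
  have image : fromBlocks A B C D * fromRows (1 : Matrix m m R) (-W) = fromRows (A - B * W) W := by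
    rw [fromBlocks_mul_fromRows]
    congr 1
    · simp [sub_eq_add_neg]
    · rw [C_eq]
      simp
  have gram : (fromRows (A - B * W) W)ᵀ * fromRows (A - B * W) W
      = (fromRows (1 : Matrix m m R) (-W))ᵀ * fromRows (1 : Matrix m m R) (-W) := by
    rw [← image, transpose_mul, Matrix.mul_assoc, ← Matrix.mul_assoc _ (fromBlocks A B C D), hO,
      Matrix.one_mul]
  simpa [transpose_fromRows, fromCols_mul_fromRows] using gram

-- Both sides of `Oᵀ [[A, B], [C, 1 + D]] = [[1, Cᵀ], [0, (1 + D)ᵀ]]` have computable determinants: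
-- `det (1 + D) * det Õ` on the left by the Schur complement, `det (1 + D)` on the right.
theorem det_blockProjection (hO : Oᵀ * O = 1) (hdet : O.det = 1)
    (hD : IsUnit (1 + O.toBlocks₂₂)) : (blockProjection O).det = 1 := by
  obtain ⟨A, B, C, D, rfl⟩ : ∃ A B C D, O = fromBlocks A B C D :=
    ⟨_, _, _, _, (fromBlocks_toBlocks O).symm⟩
  rw [toBlocks_fromBlocks₂₂] at hD
  have := hD.invertible
  have product : (fromBlocks A B C D)ᵀ * fromBlocks A B C (1 + D)
      = fromBlocks 1 Cᵀ 0 (1 + D)ᵀ := by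
    have perturbation : fromBlocks A B C (1 + D) = fromBlocks A B C D + fromBlocks 0 0 0 1 := by
      simp [fromBlocks_add, add_comm]
    rw [perturbation, Matrix.mul_add, hO, fromBlocks_transpose, fromBlocks_multiply,
      ← fromBlocks_one, fromBlocks_add]
    simp
  have dets := congrArg det product
  rw [det_mul, det_transpose, hdet, one_mul, det_fromBlocks₂₂, det_fromBlocks_zero₂₁, det_one,
    one_mul, det_transpose, invOf_eq_nonsing_inv] at dets
  exact ((isUnit_iff_isUnit_det _).1 hD).mul_eq_left.1 dets

theorem blockProjection_mem_specialOrthogonalGroup (hO : O ∈ specialOrthogonalGroup (m ⊕ n) R)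
    (hD : IsUnit (1 + O.toBlocks₂₂)) : blockProjection O ∈ specialOrthogonalGroup m R := by
  rw [mem_specialOrthogonalGroup_iff_transpose_mul_self] at hO ⊢
  exact ⟨transpose_blockProjection_mul_self hO.1 hD, det_blockProjection hO.1 hO.2 hD⟩

end BlockProjection

section Measurability

variable {m n : Type*}

instance [Countable m] [Countable n] : BorelSpace (Matrix m n ℝ) :=
  inferInstanceAs (BorelSpace (m → n → ℝ))

instance [Countable m] [Countable n] : SecondCountableTopology (Matrix m n ℝ) :=
  inferInstanceAs (SecondCountableTopology (m → n → ℝ))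

theorem measurable_matrix_inv [Fintype n] [DecidableEq n] :
    Measurable fun A : Matrix n n ℝ => A⁻¹ := by
  simp only [inv_def, Ring.inverse_eq_inv']
  have measurable_det : Measurable fun A : Matrix n n ℝ => A.det :=
    (continuous_id.matrix_det).measurable
  exact measurable_det.inv.smul continuous_id.matrix_adjugate.measurable

theorem measurableSet_specialOrthogonalGroup [Fintype n] [DecidableEq n] :
    MeasurableSet (specialOrthogonalGroup n ℝ : Set (Matrix n n ℝ)) := by
  have isClosed : IsClosed {A : Matrix n n ℝ | Aᵀ * A = 1 ∧ A.det = 1} :=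
    (isClosed_eq (by fun_prop) continuous_const).inter (isClosed_eq (by fun_prop) continuous_const)
  convert isClosed.measurableSet using 1
  ext A
  exact mem_specialOrthogonalGroup_iff_transpose_mul_self

variable [Countable m] [Fintype n] [DecidableEq n]

theorem measurable_blockGain :
    Measurable (blockGain : Matrix (m ⊕ n) (m ⊕ n) ℝ → Matrix m n ℝ) := by
  have measurable_inv : Measurable fun O : Matrix (m ⊕ n) (m ⊕ n) ℝ => (1 + O.toBlocks₂₂)⁻¹ :=
    measurable_matrix_inv.comp
      (continuous_const.add (continuous_id.matrix_submatrix Sum.inr Sum.inr)).measurable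
  exact (continuous_fst.matrix_mul continuous_snd).measurable.comp
    ((continuous_id.matrix_submatrix Sum.inl Sum.inr).measurable.prodMk measurable_inv)

theorem measurable_blockProjection :
    Measurable (blockProjection : Matrix (m ⊕ n) (m ⊕ n) ℝ → Matrix m m ℝ) := by
  have measurable_mul : Measurable fun O : Matrix (m ⊕ n) (m ⊕ n) ℝ =>
      blockGain O * O.toBlocks₂₁ :=
    (continuous_fst.matrix_mul continuous_snd).measurable.comp
      (measurable_blockGain.prodMk (continuous_id.matrix_submatrix Sum.inr Sum.inl).measurable)
  exact (continuous_id.matrix_submatrix Sum.inl Sum.inl).measurable.sub measurable_mul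

end Measurability

namespace IsHaarSO

variable {m n : Type*} [Fintype m] [DecidableEq m] [Fintype n] [DecidableEq n]
  {ν : Measure (Matrix n n ℝ)}

theorem ae_mem (h : IsHaarSO n ν) : ∀ᵐ O ∂ν, O ∈ specialOrthogonalGroup n ℝ :=
  h.2.1.mono fun _ => mem_specialOrthogonalGroup_iff_transpose_mul_self.2

theorem map_mul_left (h : IsHaarSO n ν) {U : Matrix n n ℝ}
    (hU : U ∈ specialOrthogonalGroup n ℝ) : ν.map (U * ·) = ν := by
  rw [mem_specialOrthogonalGroup_iff_transpose_mul_self] at hU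
  exact h.2.2 U hU.1 hU.2

theorem map_of_equivariant (h : IsHaarSO n ν) {f : Matrix n n ℝ → Matrix m m ℝ}
    (hf : Measurable f) (hmem : ∀ᵐ O ∂ν, f O ∈ specialOrthogonalGroup m ℝ)
    (hequiv : ∀ U ∈ specialOrthogonalGroup m ℝ, ∃ V ∈ specialOrthogonalGroup n ℝ,
      ∀ O, f (V * O) = U * f O) : IsHaarSO m (ν.map f) := by
  have := h.1
  refine ⟨Measure.isProbabilityMeasure_map hf.aemeasurable, ?_, fun U hU hdet => ?_⟩
  · simp_rw [← mem_specialOrthogonalGroup_iff_transpose_mul_self]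
    exact (ae_map_iff hf.aemeasurable measurableSet_specialOrthogonalGroup).2 hmem
  · obtain ⟨V, hV, hVU⟩ :=
      hequiv U (mem_specialOrthogonalGroup_iff_transpose_mul_self.2 ⟨hU, hdet⟩)
    calc (ν.map f).map (U * ·) = ν.map (fun O => U * f O) :=
          Measure.map_map (measurable_const_mul U) hf
      _ = ν.map (fun O => f (V * O)) := by simp_rw [hVU]
      _ = (ν.map (V * ·)).map f := (Measure.map_map hf (measurable_const_mul V)).symm
      _ = ν.map f := by rw [h.map_mul_left hV]

theorem map_submatrix_equiv (h : IsHaarSO n ν) (e : m ≃ n) :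
    IsHaarSO m (ν.map fun O => O.submatrix e e) := by
  refine h.map_of_equivariant (continuous_id.matrix_submatrix e e).measurable
    (h.ae_mem.mono fun O hO => submatrix_equiv_mem_specialOrthogonalGroup hO e) fun U hU =>
      ⟨U.submatrix e.symm e.symm, submatrix_equiv_mem_specialOrthogonalGroup hU e.symm, fun O => ?_⟩
  rw [← submatrix_mul_equiv _ _ _ e, submatrix_submatrix]
  simp

-- The law of `(X U, Y)`, for `(X, Y)` of law `ρ` and an independent `U` of law `ν`, is `ρ` by
-- right invariance of `ρ` and `ν.prod ρ.snd` by left invariance of `ν`.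
theorem eq_prod_snd_of_map_mul_right (h : IsHaarSO n ν) {β : Type*} [MeasurableSpace β]
    {ρ : Measure (Matrix n n ℝ × β)} [SFinite ρ]
    (hmem : ∀ᵐ p ∂ρ, p.1 ∈ specialOrthogonalGroup n ℝ)
    (hρ : ∀ U ∈ specialOrthogonalGroup n ℝ, ρ.map (fun p => (p.1 * U, p.2)) = ρ) :
    ρ = ν.prod ρ.snd := by
  have := h.1
  have right_translate : MeasurePreserving
      (fun q : Matrix n n ℝ × (Matrix n n ℝ × β) => (q.1, (q.2.1 * q.1, q.2.2)))
      (ν.prod ρ) (ν.prod ρ) :=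
    (MeasurePreserving.id ν).skew_product (by fun_prop) (h.ae_mem.mono hρ)
  have left_translate : MeasurePreserving
      (fun q : (Matrix n n ℝ × β) × Matrix n n ℝ => (q.1, q.1.1 * q.2))
      (ρ.prod ν) (ρ.prod ν) :=
    (MeasurePreserving.id ρ).skew_product (by fun_prop)
      (hmem.mono fun _ hp => h.map_mul_left hp)
  have law_eq_left : MeasurePreserving
      (fun q : Matrix n n ℝ × (Matrix n n ℝ × β) => (q.2.1 * q.1, q.2.2)) (ν.prod ρ) ρ :=
    measurePreserving_snd.comp right_translate
  have law_eq_right : MeasurePreserving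
      (fun q : Matrix n n ℝ × (Matrix n n ℝ × β) => (q.2.1 * q.1, q.2.2))
      (ν.prod ρ) (ν.prod ρ.snd) :=
    (((MeasurePreserving.id ν).prod ⟨measurable_snd, rfl⟩).comp
      Measure.measurePreserving_swap).comp
      (left_translate.comp Measure.measurePreserving_swap)
  exact law_eq_left.map_eq.symm.trans law_eq_right.map_eq

theorem map_transpose (h : IsHaarSO n ν) : ν.map transpose = ν := by
  have := h.1
  have measurable_transpose : Measurable (transpose : Matrix n n ℝ → Matrix n n ℝ) :=
    continuous_id.matrix_transpose.measurable
  have measurable_pair : Measurable fun O : Matrix n n ℝ => (Oᵀ, ()) :=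
    measurable_transpose.prodMk measurable_const
  have map_pair_eq : ν.map (fun O => (Oᵀ, ())) = ν.prod (ν.map fun O => (Oᵀ, ())).snd := by
    refine h.eq_prod_snd_of_map_mul_right ?_ fun U hU => ?_
    · exact (ae_map_iff measurable_pair.aemeasurable
        (measurable_fst measurableSet_specialOrthogonalGroup)).2
          (h.ae_mem.mono fun _ => transpose_mem_specialOrthogonalGroup)
    · calc (ν.map fun O => (Oᵀ, ())).map (fun p => (p.1 * U, p.2))
          _ = ν.map (fun O => ((Uᵀ * O)ᵀ, ())) := by
            rw [Measure.map_map (by fun_prop) measurable_pair]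
            simp [Function.comp_def]
          _ = (ν.map (Uᵀ * ·)).map (fun O => (Oᵀ, ())) :=
            (Measure.map_map measurable_pair (measurable_const_mul _)).symm
          _ = ν.map (fun O => (Oᵀ, ())) := by
            rw [h.map_mul_left (transpose_mem_specialOrthogonalGroup hU)]
  have := Measure.isProbabilityMeasure_map (μ := ν) measurable_pair.aemeasurable
  have fst_eq := congrArg Measure.fst map_pair_eq
  rwa [Measure.fst_map_prodMk measurable_const, Measure.fst_prod] at fst_eq

theorem map_mul_right (h : IsHaarSO n ν) {U : Matrix n n ℝ}
    (hU : U ∈ specialOrthogonalGroup n ℝ) : ν.map (· * U) = ν := by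
  have measurable_transpose : Measurable (transpose : Matrix n n ℝ → Matrix n n ℝ) :=
    continuous_id.matrix_transpose.measurable
  calc ν.map (· * U) = (ν.map transpose).map (· * U) := by rw [h.map_transpose]
    _ = ν.map (fun O => (Uᵀ * O)ᵀ) := by
      rw [Measure.map_map (measurable_mul_const U) measurable_transpose]
      simp [Function.comp_def]
    _ = (ν.map (Uᵀ * ·)).map transpose :=
      (Measure.map_map measurable_transpose (measurable_const_mul _)).symm
    _ = ν := by rw [h.map_mul_left (transpose_mem_specialOrthogonalGroup hU), h.map_transpose]

theorem measure_setOf_mulVec_eq_zero (h : IsHaarSO n ν) {v w : n → ℝ}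
    (hw : ((fun U : Matrix n n ℝ => U *ᵥ w) '' specialOrthogonalGroup n ℝ).Infinite) :
    ν {O | O *ᵥ v = w} = 0 := by
  have := h.1
  have measurable_mulVec : Measurable fun O : Matrix n n ℝ => O *ᵥ v :=
    (continuous_id.matrix_mulVec continuous_const).measurable
  have measure_orbit_point : ∀ U ∈ specialOrthogonalGroup n ℝ,
      ν.map (· *ᵥ v) {U *ᵥ w} = ν {O | O *ᵥ v = w} := by
    intro U hU
    have hU' := mem_specialOrthogonalGroup_iff_transpose_mul_self.1 hU
    rw [Measure.map_apply measurable_mulVec (measurableSet_singleton _)]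
    conv_lhs => rw [← h.map_mul_left hU]
    rw [Measure.map_apply (measurable_const_mul U)
      (measurable_mulVec (measurableSet_singleton _))]
    congr 1
    ext O
    simp only [Set.mem_preimage, Set.mem_singleton_iff, Set.mem_ofPred_eq, ← mulVec_mulVec]
    refine ⟨fun hO => ?_, fun hO => by rw [hO]⟩
    simpa [← Matrix.mul_assoc, hU'.1] using congrArg (Uᵀ *ᵥ ·) hO
  by_contra hne
  exact measure_ne_top (ν.map (· *ᵥ v)) _ <| hw.meas_eq_top
    ⟨_, hne, Set.forall_mem_image.2 fun U hU => (measure_orbit_point U hU).ge⟩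

theorem ae_apply_self_ne_neg_one (h : IsHaarSO n ν) (i : n) : ∀ᵐ O ∂ν, O i i ≠ -1 := by
  have := h.1
  rcases subsingleton_or_nontrivial n with _ | _
  · filter_upwards [h.2.1] with O hO
    have := hO.2
    rw [det_eq_elem_of_subsingleton O i] at this
    norm_num [this]
  · have null := h.measure_setOf_mulVec_eq_zero (v := Pi.single i 1)
      (infinite_image_mulVec_single i (neg_ne_zero.2 one_ne_zero))
    filter_upwards [h.2.1, measure_eq_zero_iff_ae_notMem.1 null] with O hO hne hii
    refine hne ?_
    rw [mulVec_eq_neg_of_dotProduct_mulVec_eq_neg hO.1 (by simp [hii]),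
      Pi.single_neg]

variable {μ : Measure (Matrix (m ⊕ n) (m ⊕ n) ℝ)}

theorem map_blockProjection (h : IsHaarSO (m ⊕ n) μ)
    (hD : ∀ᵐ O ∂μ, IsUnit (1 + O.toBlocks₂₂)) : IsHaarSO m (μ.map blockProjection) := by
  refine h.map_of_equivariant measurable_blockProjection ?_ fun U hU =>
    ⟨_, fromBlocks_one_mem_specialOrthogonalGroup hU, blockProjection_fromBlocks_one_mul U⟩
  filter_upwards [h.ae_mem, hD] with O hO hunit
  exact blockProjection_mem_specialOrthogonalGroup hO hunit

theorem ae_isUnit_one_add_submatrix_sumMap (h : IsHaarSO (m ⊕ n) μ)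
    (hD : ∀ᵐ O ∂μ, IsUnit (1 + O.toBlocks₂₂)) (i : m) :
    ∀ᵐ O ∂μ, IsUnit
      (1 + O.submatrix (Sum.map (fun _ : Unit => i) id) (Sum.map (fun _ : Unit => i) id)) := by
  have entry_ne := ae_of_ae_map measurable_blockProjection.aemeasurable
    ((h.map_blockProjection hD).ae_apply_self_ne_neg_one i)
  filter_upwards [hD, entry_ne] with O hunit hne
  rw [isUnit_iff_isUnit_det, det_one_add_submatrix_sumMap hunit, IsUnit.mul_iff]
  refine ⟨(isUnit_iff_isUnit_det _).1 hunit, ?_⟩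
  rw [isUnit_iff_ne_zero, det_unique]
  simpa [add_comm, ← eq_neg_iff_add_eq_zero] using hne

theorem ae_isUnit_one_add_toBlocks₂₂ (h : IsHaarSO (m ⊕ n) μ) :
    ∀ᵐ O ∂μ, IsUnit (1 + O.toBlocks₂₂) := by
  induction hn : Fintype.card n generalizing m n with
  | zero =>
    have := Fintype.card_eq_zero_iff.1 hn
    exact .of_forall fun _ => isUnit_of_subsingleton _
  | succ N ih =>
    obtain ⟨i⟩ : Nonempty n := Fintype.card_pos_iff.1 (by omega)
    have card_ne : Fintype.card {j // j ≠ i} = N := by simp [Fintype.card_subtype_compl, hn]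
    let e : Unit ⊕ {j // j ≠ i} ≃ n := Fintype.equivOfCardEq (by
      rw [Fintype.card_sum, card_ne, hn, Fintype.card_unit, add_comm])
    let e' : (m ⊕ Unit) ⊕ {j // j ≠ i} ≃ m ⊕ n :=
      (Equiv.sumAssoc m Unit _).trans (Equiv.sumCongr (Equiv.refl m) e)
    have h' := h.map_submatrix_equiv e'
    have ae_isUnit := h'.ae_isUnit_one_add_submatrix_sumMap (ih h' card_ne) (Sum.inr ())
    filter_upwards [ae_of_ae_map
      (continuous_id.matrix_submatrix e' e').measurable.aemeasurable ae_isUnit] with O hO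
    rw [← isUnit_submatrix_equiv e e]
    convert hO using 1
    ext (_ | _) (_ | _) <;> simp [toBlocks₂₂, e', one_apply]

theorem indepFun_of_map_mul_right {Ω β : Type*} [MeasurableSpace Ω] [MeasurableSpace β]
    {P : Measure Ω} {X : Ω → Matrix n n ℝ} {Y : Ω → β} (hX : IsHaarSO n (P.map X))
    (hY : AEMeasurable Y P)
    (hXY : ∀ U ∈ specialOrthogonalGroup n ℝ,
      P.map (fun ω => (X ω * U, Y ω)) = P.map fun ω => (X ω, Y ω)) : IndepFun X Y P := by
  have hXm : AEMeasurable X P := .of_map_ne_zero hX.1.ne_zero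
  have := (Measure.isProbabilityMeasure_map_iff hXm).1 hX.1
  rw [indepFun_iff_map_prod_eq_prod_map_map hXm hY, ← Measure.snd_map_prodMk₀ (Y := Y) hXm]
  refine hX.eq_prod_snd_of_map_mul_right ?_ fun U hU => ?_
  · exact (ae_map_iff (hXm.prodMk hY) (measurable_fst measurableSet_specialOrthogonalGroup)).2
      (ae_of_ae_map hXm hX.ae_mem)
  · rw [AEMeasurable.map_map_of_aemeasurable (by fun_prop) (hXm.prodMk hY)]
    exact hXY U hU

theorem indepFun_blockProjection_blockGain {Ω : Type*} [MeasurableSpace Ω] {P : Measure Ω}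
    {O : Ω → Matrix (m ⊕ n) (m ⊕ n) ℝ} (h : IsHaarSO (m ⊕ n) (P.map O)) :
    IndepFun (fun ω => blockProjection (O ω)) (fun ω => blockGain (O ω)) P := by
  have hO : AEMeasurable O P := .of_map_ne_zero h.1.ne_zero
  have measurable_pair : Measurable fun A : Matrix (m ⊕ n) (m ⊕ n) ℝ =>
      (blockProjection A, blockGain A) := measurable_blockProjection.prodMk measurable_blockGain
  have haar_projection := h.map_blockProjection h.ae_isUnit_one_add_toBlocks₂₂
  rw [AEMeasurable.map_map_of_aemeasurable measurable_blockProjection.aemeasurable hO]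
    at haar_projection
  refine haar_projection.indepFun_of_map_mul_right (measurable_blockGain.comp_aemeasurable hO)
    fun U hU => ?_
  let V : Matrix (m ⊕ n) (m ⊕ n) ℝ := fromBlocks U 0 0 1
  calc P.map (fun ω => (blockProjection (O ω) * U, blockGain (O ω)))
      = P.map (fun ω => (blockProjection (O ω * V), blockGain (O ω * V))) := by
        simp_rw [V, blockProjection_mul_fromBlocks_one, blockGain_mul_fromBlocks_one]
    _ = ((P.map O).map (· * V)).map fun A => (blockProjection A, blockGain A) := by
        rw [Measure.map_map measurable_pair (measurable_mul_const V),
          AEMeasurable.map_map_of_aemeasurable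
            (measurable_pair.comp (measurable_mul_const V)).aemeasurable hO]
        rfl
    _ = P.map (fun ω => (blockProjection (O ω), blockGain (O ω))) := by
        rw [h.map_mul_right (fromBlocks_one_mem_specialOrthogonalGroup hU),
          AEMeasurable.map_map_of_aemeasurable measurable_pair.aemeasurable hO]
        rfl

end IsHaarSO

theorem haar_block_projection_general {m n Ω : Type*} [Fintype m] [DecidableEq m] [Fintype n]
    [DecidableEq n] [MeasurableSpace Ω] {P : Measure Ω} {O : Ω → Matrix (m ⊕ n) (m ⊕ n) ℝ}
    (hlaw : IsHaarSO (m ⊕ n) (P.map O)) :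
    (∀ᵐ ω ∂P, IsUnit (1 + (O ω).toBlocks₂₂)) ∧
      IsHaarSO m (P.map fun ω => blockProjection (O ω)) ∧
      IndepFun (fun ω => blockProjection (O ω)) (fun ω => blockGain (O ω)) P := by
  have hO : AEMeasurable O P := .of_map_ne_zero hlaw.1.ne_zero
  have hD := hlaw.ae_isUnit_one_add_toBlocks₂₂
  have haar_projection := hlaw.map_blockProjection hD
  rw [AEMeasurable.map_map_of_aemeasurable measurable_blockProjection.aemeasurable hO]
    at haar_projection
  exact ⟨ae_of_ae_map hO hD, haar_projection, hlaw.indepFun_blockProjection_blockGain⟩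

/-- Let `T̄ = M + N` and let `O = [[A, B], [C, D]]` be a uniformly random (Haar) `T̄×T̄`
orthogonal matrix of determinant `1`, with `A` of size `M×M` and `D` of size `N×N`. Then almost
surely `1 + D` is invertible, the matrix `Õ = A − B(1+D)⁻¹C` is a uniformly random (Haar)
`M×M` orthogonal matrix of determinant `1`, and `Õ` is independent of `B(1+D)⁻¹`. -/
theorem haar_block_projection (M N : ℕ) (hM : 0 < M) (hN : 0 < N)
    (Ω : Type*) [MeasurableSpace Ω] (P : Measure Ω) [IsProbabilityMeasure P]
    (O : Ω → Matrix (Fin M ⊕ Fin N) (Fin M ⊕ Fin N) ℝ) (hmeas : Measurable O)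
    (hlaw : IsHaarSO (Fin M ⊕ Fin N) (P.map O)) :
    (∀ᵐ ω ∂P, IsUnit (1 + (O ω).toBlocks₂₂)) ∧
    IsHaarSO (Fin M)
      (P.map fun ω =>
        (O ω).toBlocks₁₁ - (O ω).toBlocks₁₂ * (1 + (O ω).toBlocks₂₂)⁻¹ * (O ω).toBlocks₂₁) ∧
    IndepFun
      (fun ω =>
        (O ω).toBlocks₁₁ - (O ω).toBlocks₁₂ * (1 + (O ω).toBlocks₂₂)⁻¹ * (O ω).toBlocks₂₁)
      (fun ω => (O ω).toBlocks₁₂ * (1 + (O ω).toBlocks₂₂)⁻¹) P :=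
  haar_block_projection_general hlaw

end
end

section
/- Let O be a T̄×T̄ real orthogonal matrix of determinant 1, written in block form O = [[A, B],[C, D]] according to the splitting T̄ = (T̄−N) + N. If no complex eigenvalue of O equals −1, then no complex eigenvalue of D equals −1 (in particular 1_N + D is invertible) and no complex eigenvalue of A − B(1_N + D)^{−1}C equals −1. -/
open Matrix

noncomputable section

/-!
Let `O` be a contraction, encoded as positive semidefiniteness of `1 - Oᴴ * O`, and let `z` be a
scalar of modulus at least `1`. If `D v = z v`, then `O` sends `(0, v)` to `(B v, z v)`, and since
`O` does not increase length, `B v = 0`: an eigenvector of `D` for `z` extends by zero to an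
eigenvector of `O`. So if `z` is not an eigenvalue of `O`, it is not an eigenvalue of `D`, and then
`O - z` is invertible precisely when the Schur complement `A - z - B (D - z)⁻¹ C` of its block
`D - z` is. An orthogonal matrix is a contraction, and `z = -1` has modulus `1`.
-/

section Spectrum

variable {n : Type*} [Fintype n] [DecidableEq n]

theorem mem_spectrum_map_algebraMap_iff {K L : Type*} [Field K] [Field L] [Algebra K L]
    {X : Matrix n n K} {r : K} :
    algebraMap K L r ∈ spectrum L (X.map (algebraMap K L)) ↔ r ∈ spectrum K X := by
  rw [mem_spectrum_iff_isRoot_charpoly, mem_spectrum_iff_isRoot_charpoly, charpoly_map,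
    Polynomial.isRoot_map_iff (algebraMap K L).injective]

theorem neg_one_notMem_spectrum_iff {R A : Type*} [CommRing R] [Ring A] [Algebra R A] {a : A} :
    (-1 : R) ∉ spectrum R a ↔ IsUnit (1 + a) := by
  rw [spectrum.notMem_iff, map_neg, map_one, ← neg_add', IsUnit.neg_iff]

theorem mem_spectrum_iff_exists_mulVec_eq_smul {K : Type*} [Field K] {X : Matrix n n K} {z : K} :
    z ∈ spectrum K X ↔ ∃ v ≠ 0, X *ᵥ v = z • v := by
  rw [← spectrum_toLin', ← Module.End.hasEigenvalue_iff_mem_spectrum]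
  refine ⟨fun h ↦ ?_, fun ⟨v, hv, hXv⟩ ↦ ?_⟩
  · obtain ⟨v, hv⟩ := h.exists_hasEigenvector
    exact ⟨v, hv.2, hv.apply_eq_smul⟩
  · exact Module.End.hasEigenvalue_of_hasEigenvector
      ⟨Module.End.mem_eigenspace_iff.mpr hXv, hv⟩

end Spectrum

section SchurComplement

variable {m n R : Type*} [Fintype m] [Fintype n] [DecidableEq m] [DecidableEq n] [CommRing R]
  {A : Matrix m m R} {B : Matrix m n R} {C : Matrix n m R} {D : Matrix n n R} {z : R}

theorem fromBlocks_sub_algebraMap :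
    fromBlocks A B C D - algebraMap R _ z =
      fromBlocks (A - algebraMap R _ z) B C (D - algebraMap R _ z) := by
  ext (i | i) (j | j) <;> simp [algebraMap_matrix_apply]

theorem mem_spectrum_fromBlocks_iff_of_notMem_spectrum₂₂ (hD : z ∉ spectrum R D) :
    z ∈ spectrum R (fromBlocks A B C D) ↔
      z ∈ spectrum R (A - B * (D - algebraMap R _ z)⁻¹ * C) := by
  rw [spectrum.notMem_iff, IsUnit.sub_iff] at hD
  let := hD.invertible
  rw [← not_iff_not, spectrum.notMem_iff, spectrum.notMem_iff, IsUnit.sub_iff,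
    IsUnit.sub_iff (x := algebraMap R (Matrix m m R) z), fromBlocks_sub_algebraMap,
    isUnit_fromBlocks_iff_of_invertible₂₂, invOf_eq_nonsing_inv, sub_right_comm]

end SchurComplement

section Contraction

variable {m n : Type*} [Fintype m] [Fintype n] [DecidableEq n]

theorem dotProduct_star_mulVec_self_le {R : Type*} [Ring R] [PartialOrder R] [StarRing R]
    [StarOrderedRing R] {X : Matrix m n R} (hX : (1 - Xᴴ * X).PosSemidef) (v : n → R) :
    star (X *ᵥ v) ⬝ᵥ (X *ᵥ v) ≤ star v ⬝ᵥ v := by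
  have h := hX.dotProduct_mulVec_nonneg v
  rwa [sub_mulVec, one_mulVec, dotProduct_sub, sub_nonneg, ← mulVec_mulVec, dotProduct_mulVec,
    ← star_mulVec] at h

variable [DecidableEq m]

theorem mulVec_eq_zero_of_fromBlocks_contraction {R : Type*} [CommRing R] [NoZeroDivisors R]
    [PartialOrder R] [StarRing R] [StarOrderedRing R]
    {A : Matrix m m R} {B : Matrix m n R} {C : Matrix n m R} {D : Matrix n n R}
    (hO : (1 - (fromBlocks A B C D)ᴴ * fromBlocks A B C D).PosSemidef)
    {z : R} (hz : 1 ≤ star z * z) {v : n → R} (hv : D *ᵥ v = z • v) :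
    B *ᵥ v = 0 := by
  have hOv : fromBlocks A B C D *ᵥ Sum.elim 0 v = Sum.elim (B *ᵥ v) (z • v) := by
    simp [fromBlocks_mulVec, hv]
  have contracted : star (B *ᵥ v) ⬝ᵥ (B *ᵥ v) + star z * z * (star v ⬝ᵥ v) ≤ star v ⬝ᵥ v := by
    have h := dotProduct_star_mulVec_self_le hO (Sum.elim 0 v)
    simpa [hOv, Function.star_sumElim, mul_assoc, mul_left_comm] using h
  have expanded : star v ⬝ᵥ v ≤ star z * z * (star v ⬝ᵥ v) :=
    le_mul_of_one_le_left (dotProduct_star_self_nonneg v) hz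
  have nonpos : star (B *ᵥ v) ⬝ᵥ (B *ᵥ v) ≤ 0 :=
    nonpos_of_add_le_left (contracted.trans expanded)
  exact dotProduct_star_self_eq_zero.mp (nonpos.antisymm (dotProduct_star_self_nonneg _))

variable {K : Type*} [Field K] [PartialOrder K] [StarRing K] [StarOrderedRing K]
  {A : Matrix m m K} {B : Matrix m n K} {C : Matrix n m K} {D : Matrix n n K} {z : K}

theorem mem_spectrum_fromBlocks_of_mem_spectrum₂₂
    (hO : (1 - (fromBlocks A B C D)ᴴ * fromBlocks A B C D).PosSemidef)
    (hz : 1 ≤ star z * z) (hD : z ∈ spectrum K D) :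
    z ∈ spectrum K (fromBlocks A B C D) := by
  obtain ⟨v, hv, hDv⟩ := mem_spectrum_iff_exists_mulVec_eq_smul.mp hD
  have hBv : B *ᵥ v = 0 := mulVec_eq_zero_of_fromBlocks_contraction hO hz hDv
  refine mem_spectrum_iff_exists_mulVec_eq_smul.mpr ⟨Sum.elim 0 v, ?_, ?_⟩
  · exact fun h ↦ hv (funext fun i ↦ congrFun h (Sum.inr i))
  · ext (i | i) <;> simp [fromBlocks_mulVec, hBv, hDv]

theorem no_eigenvalue_minus_one_general
    (hO : (1 - (fromBlocks A B C D)ᴴ * fromBlocks A B C D).PosSemidef)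
    (hz : 1 ≤ star z * z) (hspec : z ∉ spectrum K (fromBlocks A B C D)) :
    z ∉ spectrum K D ∧ z ∉ spectrum K (A - B * (D - algebraMap K _ z)⁻¹ * C) := by
  have hD : z ∉ spectrum K D := mt (mem_spectrum_fromBlocks_of_mem_spectrum₂₂ hO hz) hspec
  exact ⟨hD, mt (mem_spectrum_fromBlocks_iff_of_notMem_spectrum₂₂ hD).mpr hspec⟩

end Contraction

/-- Let `O` be a `T̄×T̄` real orthogonal matrix of determinant `1`, written in block form
`O = [[A, B], [C, D]]` according to the splitting `T̄ = (T̄−N) + N`. If no complex eigenvalue of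
`O` equals `−1`, then no complex eigenvalue of `D` equals `−1` (in particular `1 + D` is
invertible), and no complex eigenvalue of `A − B(1+D)⁻¹C` equals `−1`. -/
theorem no_eigenvalue_minus_one (M N : ℕ)
    (O : Matrix (Fin M ⊕ Fin N) (Fin M ⊕ Fin N) ℝ)
    (horth : Oᵀ * O = 1) (hdet : O.det = 1)
    (hO : (-1 : ℂ) ∉ spectrum ℂ (O.map (algebraMap ℝ ℂ))) :
    (-1 : ℂ) ∉ spectrum ℂ ((O.toBlocks₂₂).map (algebraMap ℝ ℂ)) ∧
    IsUnit (1 + O.toBlocks₂₂) ∧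
    (-1 : ℂ) ∉ spectrum ℂ
      ((O.toBlocks₁₁ - O.toBlocks₁₂ * (1 + O.toBlocks₂₂)⁻¹ * O.toBlocks₂₁).map
        (algebraMap ℝ ℂ)) := by
  have hcontr : (1 - Oᴴ * O).PosSemidef := by
    simp [conjTranspose_eq_transpose_of_trivial, horth, PosSemidef.zero]
  have neg_one_eq : (-1 : ℂ) = algebraMap ℝ ℂ (-1) := by simp
  rw [neg_one_eq, mem_spectrum_map_algebraMap_iff] at hO
  simp only [neg_one_eq, mem_spectrum_map_algebraMap_iff, ← neg_one_notMem_spectrum_iff (R := ℝ)]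
  rw [← fromBlocks_toBlocks O] at hcontr hO
  obtain ⟨hD, hS⟩ := no_eigenvalue_minus_one_general hcontr (by simp) hO
  exact ⟨hD, hD, by simpa [add_comm] using hS⟩

end
end

section
/- Fix a positive integer k and constants C₁, C₂ > 0, and suppose N → ∞ with T̄ = T̄(N) satisfying T̄/N ∈ [k+1+C₁, C₂]. For each N let O₁ and O₂ be random T̄×T̄ matrices on a common probability space such that: O₁ is a uniformly random (Haar) orthogonal matrix of determinant 1; the complex eigenvalues of O₂ are almost surely different from −1; and for each ε > 0, Prob(‖O₁ − O₂‖₂ < N^{−1+ε}) → 1 as N → ∞. Write O₁ = [[A₁, B₁],[C₁′, D₁]] and O₂ = [[A₂, B₂],[C₂′, D₂]] in block form according to T̄ = (T̄−N) + N. Then for each ε > 0, Prob( ‖(A₁ − B₁(1_N + D₁)^{−1}C₁′) − (A₂ − B₂(1_N + D₂)^{−1}C₂′)‖₂ < N^{−1+ε} ) → 1 as N → ∞. -/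
open MeasureTheory ProbabilityTheory Filter Matrix

noncomputable section

/-- spectral norm (largest singular value) of a real matrix. -/
def specNorm {m n : Type*} [Fintype m] [Fintype n] [DecidableEq n] (A : Matrix m n ℝ) : ℝ :=
  ‖LinearMap.toContinuousLinearMap (Matrix.toEuclideanLin A)‖

/-- the matrix `A − B (1 + D)⁻¹ C` built from the blocks of a `(M + N) × (M + N)` matrix
`O = [[A, B], [C, D]]`. -/
def schurLike {M N : ℕ} (O : Matrix (Fin M ⊕ Fin N) (Fin M ⊕ Fin N) ℝ) :
    Matrix (Fin M) (Fin M) ℝ :=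
  O.toBlocks₁₁ - O.toBlocks₁₂ * (1 + O.toBlocks₂₂)⁻¹ * O.toBlocks₂₁

/-!
For a fixed unit vector `w`, the vector `(Cᵀ w, Dᵀ w) = O₁ᵀ (0, w)` is uniform on the unit sphere of
`ℝ^(M + N)`, and comparing the volume of a cone with that of an ellipsoid shows that
`‖Cᵀ w‖ ≤ r` has probability at most `2 ^ (M + N) * r ^ M`. If some unit vector `w` has
`‖Cᵀ w‖ ≤ t`, then `Cᵀ` shrinks every vector in the ball of radius `t` around `w` to at most `4 t`
times its length, so averaging over the ball bounds the probability that such a `w` exists by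
`(4 / t) ^ N * (8 t) ^ M`. As `M ≥ (1 + C₁) N`, this is exponentially small in `N` for a suitable
`t` depending only on `C₁`. Otherwise `‖Dᵀ w‖² = 1 - ‖Cᵀ w‖² ≤ 1 - t²` for all unit `w`, so `‖D‖`
stays away from `1` and the matrix `A - B (1 + D)⁻¹ C` depends on the orthogonal matrix in a
Lipschitz way, with a constant independent of `N` that an arbitrarily small power of `N` absorbs.
-/

section Rotation

variable {E : Type*} [NormedAddCommGroup E] [InnerProductSpace ℝ E] [FiniteDimensional ℝ E]

lemma det_reflection_orthogonal_singleton {v : E} (hv : v ≠ 0) :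
    LinearMap.det (Submodule.reflection (ℝ ∙ v)ᗮ).toLinearMap = -1 := by
  rw [Submodule.det_reflection, Submodule.orthogonal_orthogonal, finrank_span_singleton hv, pow_one]

lemma exists_linearIsometryEquiv_det_eq_one {x y : E} (h : ‖x‖ = ‖y‖) :
    ∃ f : E ≃ₗᵢ[ℝ] E, LinearMap.det f.toLinearMap = 1 ∧ (f x = y ∨ f x = -y) := by
  by_cases hxy : x = y
  · exact ⟨LinearIsometryEquiv.refl ℝ E, LinearMap.det_id, Or.inl hxy⟩
  have hy : y ≠ 0 := by
    rintro rfl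
    exact hxy (norm_eq_zero.1 (h.trans norm_zero))
  refine ⟨(Submodule.reflection (ℝ ∙ (x - y))ᗮ).trans (Submodule.reflection (ℝ ∙ y)ᗮ), ?_,
    Or.inr ?_⟩
  · change LinearMap.det ((Submodule.reflection (ℝ ∙ y)ᗮ).toLinearMap ∘ₗ
      (Submodule.reflection (ℝ ∙ (x - y))ᗮ).toLinearMap) = 1
    rw [LinearMap.det_comp, det_reflection_orthogonal_singleton hy,
      det_reflection_orthogonal_singleton (sub_ne_zero.2 hxy)]
    norm_num
  · rw [LinearIsometryEquiv.trans_apply, Submodule.reflection_sub h]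
    exact Submodule.reflection_orthogonalComplement_singleton_eq_neg y

end Rotation

section MatrixIsometry

variable {m n : Type*} [Fintype m] [Fintype n] [DecidableEq n]

lemma det_toEuclideanLin (A : Matrix n n ℝ) : LinearMap.det (toEuclideanLin A) = A.det := by
  rw [toEuclideanLin_eq_toLin_orthonormal, LinearMap.det_toLin]

lemma forall_norm_toEuclideanLin_eq_iff {A : Matrix m n ℝ} :
    (∀ x, ‖toEuclideanLin A x‖ = ‖x‖) ↔ Aᵀ * A = 1 := by
  classical
  have h := (toEuclideanLin A).toContinuousLinearMap.norm_map_iff_adjoint_comp_self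
  rw [← LinearMap.adjoint_toContinuousLinearMap, ← toEuclideanLin_conjTranspose_eq_adjoint,
    conjTranspose_eq_transpose_of_trivial] at h
  refine h.trans ⟨fun h' => toEuclideanLin.injective ?_, fun h' => ?_⟩
  · rw [toLpLin_mul 2 2 2, toLpLin_one]
    exact congrArg ContinuousLinearMap.toLinearMap h'
  · apply ContinuousLinearMap.coe_injective
    change toEuclideanLin Aᵀ ∘ₗ toEuclideanLin A = LinearMap.id
    rw [← toLpLin_mul, h', toLpLin_one]

lemma exists_specialOrthogonal_toEuclideanLin_eq {x y : EuclideanSpace ℝ n} (h : ‖x‖ = ‖y‖) :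
    ∃ U : Matrix n n ℝ, Uᵀ * U = 1 ∧ U.det = 1 ∧
      (toEuclideanLin U x = y ∨ toEuclideanLin U x = -y) := by
  obtain ⟨f, hdet, hf⟩ := exists_linearIsometryEquiv_det_eq_one h
  have hU : toEuclideanLin (toEuclideanLin.symm f.toLinearMap) = f.toLinearMap :=
    toEuclideanLin.apply_symm_apply _
  refine ⟨toEuclideanLin.symm f.toLinearMap,
    forall_norm_toEuclideanLin_eq_iff.1 fun z => ?_, ?_, ?_⟩
  · rw [hU]
    exact f.norm_map z
  · rw [← det_toEuclideanLin, hU, hdet]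
  · rw [hU]
    exact hf

end MatrixIsometry

section MatrixMeasurability

instance borelSpace_matrix {m n : Type*} [Countable m] [Countable n] : BorelSpace (Matrix m n ℝ) :=
  inferInstanceAs (BorelSpace (m → n → ℝ))

instance secondCountableTopology_matrix {m n : Type*} [Countable m] [Countable n] :
    SecondCountableTopology (Matrix m n ℝ) :=
  inferInstanceAs (SecondCountableTopology (m → n → ℝ))

lemma continuous_toEuclideanLin_apply {X m n : Type*} [TopologicalSpace X] [Fintype n]
    [DecidableEq n] {A : X → Matrix m n ℝ} {x : X → EuclideanSpace ℝ n} (hA : Continuous A)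
    (hx : Continuous x) : Continuous fun p => toEuclideanLin (A p) (x p) :=
  (PiLp.continuous_toLp 2 _).comp (hA.matrix_mulVec ((PiLp.continuous_ofLp 2 _).comp hx))

end MatrixMeasurability

namespace IsHaarSO

variable {n : Type*} [Fintype n] [DecidableEq n] {ν : Measure (Matrix n n ℝ)}
  {S : Set (EuclideanSpace ℝ n)}

/-- A rotation carries `x` to `± c • y`, and `S` does not see the factor `± c`. -/
lemma measure_transpose_mem_cone_eq (hν : IsHaarSO n ν) (hS : MeasurableSet S)
    (hcone : ∀ c : ℝ, c ≠ 0 → ∀ z, c • z ∈ S ↔ z ∈ S) {x y : EuclideanSpace ℝ n}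
    (hx : x ≠ 0) (hy : y ≠ 0) :
    ν {O | toEuclideanLin Oᵀ x ∈ S} = ν {O | toEuclideanLin Oᵀ y ∈ S} := by
  have hc : ‖x‖ / ‖y‖ ≠ 0 := div_ne_zero (norm_ne_zero_iff.2 hx) (norm_ne_zero_iff.2 hy)
  obtain ⟨U, hU, hdet, hUx⟩ := exists_specialOrthogonal_toEuclideanLin_eq
    (x := x) (y := (‖x‖ / ‖y‖) • y) (by
      rw [norm_smul, norm_div, norm_norm, norm_norm, div_mul_cancel₀ _ (norm_ne_zero_iff.2 hy)])
  obtain ⟨c, hc, hUx⟩ : ∃ c : ℝ, c ≠ 0 ∧ toEuclideanLin U x = c • y := by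
    rcases hUx with h | h
    · exact ⟨_, hc, h⟩
    · exact ⟨_, neg_ne_zero.2 hc, by rw [h, neg_smul]⟩
  have hinv := hν.2.2 Uᵀ (by rw [transpose_transpose, mul_eq_one_comm.1 hU])
    (by rw [det_transpose, hdet])
  have hm : MeasurableSet {O : Matrix n n ℝ | toEuclideanLin Oᵀ x ∈ S} :=
    (continuous_toEuclideanLin_apply continuous_id.matrix_transpose continuous_const).measurable hS
  have hmul : Measurable fun O : Matrix n n ℝ => Uᵀ * O :=
    (continuous_const.matrix_mul continuous_id).measurable
  conv_lhs => rw [← hinv, Measure.map_apply hmul hm]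
  congr 1
  ext O
  rw [Set.mem_preimage, Set.mem_ofPred_eq, transpose_mul, transpose_transpose, toLpLin_mul 2 2 2,
    LinearMap.comp_apply, hUx, map_smul, hcone c hc, Set.mem_ofPred_eq]

lemma measure_transpose_mem_cone_mul_volume (hν : IsHaarSO n ν) (hS : MeasurableSet S)
    (hcone : ∀ c : ℝ, c ≠ 0 → ∀ z, c • z ∈ S ↔ z ∈ S) {x : EuclideanSpace ℝ n} (hx : x ≠ 0) :
    ν {O | toEuclideanLin Oᵀ x ∈ S} * volume (Metric.closedBall (0 : EuclideanSpace ℝ n) 1) =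
      volume (S ∩ Metric.closedBall 0 1) := by
  have := hν.1
  have : Nontrivial (EuclideanSpace ℝ n) := ⟨x, 0, hx⟩
  set B := Metric.closedBall (0 : EuclideanSpace ℝ n) 1
  let G : Set (Matrix n n ℝ × EuclideanSpace ℝ n) := {p | toEuclideanLin p.1ᵀ p.2 ∈ S ∩ B}
  have hG : MeasurableSet G :=
    (continuous_toEuclideanLin_apply continuous_fst.matrix_transpose continuous_snd).measurable
      (hS.inter Metric.isClosed_closedBall.measurableSet)
  have hvertical : ∀ᵐ O ∂ν, volume (Prod.mk O ⁻¹' G) = volume (S ∩ B) := by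
    filter_upwards [hν.2.1] with O hO
    change volume (toEuclideanLin Oᵀ ⁻¹' (S ∩ B)) = _
    have hdet : LinearMap.det (toEuclideanLin Oᵀ) = 1 := by
      rw [det_toEuclideanLin, det_transpose, hO.2]
    rw [Measure.addHaar_preimage_linearMap _ (by rw [hdet]; exact one_ne_zero), hdet]
    simp only [inv_one, abs_one, ENNReal.ofReal_one, one_mul]
  have hhorizontal : ∀ᵐ y, ν ((fun O => (O, y)) ⁻¹' G) =
      B.indicator (fun _ => ν {O | toEuclideanLin Oᵀ x ∈ S}) y := by
    filter_upwards [Measure.ae_ne volume 0] with y hy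
    have hmem : (fun O => (O, y)) ⁻¹' G =ᵐ[ν] {O | toEuclideanLin Oᵀ y ∈ S ∧ y ∈ B} := by
      filter_upwards [hν.2.1] with O hO
      have hnorm := forall_norm_toEuclideanLin_eq_iff.2
        (show Oᵀᵀ * Oᵀ = 1 by rw [transpose_transpose, mul_eq_one_comm.1 hO.1]) y
      refine propext (and_congr_right' ?_)
      rw [mem_closedBall_zero_iff, mem_closedBall_zero_iff, hnorm]
    rw [measure_congr hmem]
    by_cases hyB : y ∈ B
    · simp only [hyB, and_true, Set.indicator_of_mem]
      exact hν.measure_transpose_mem_cone_eq hS hcone hy hx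
    · simp [hyB]
  calc ν {O | toEuclideanLin Oᵀ x ∈ S} * volume B
      = (ν.prod volume) G := by
        rw [Measure.prod_apply_symm hG, lintegral_congr_ae hhorizontal,
          lintegral_indicator_const Metric.isClosed_closedBall.measurableSet]
    _ = volume (S ∩ B) := by
        rw [Measure.prod_apply hG, lintegral_congr_ae hvertical, lintegral_const, measure_univ,
          mul_one]

lemma measure_norm_apply_transpose_le (hν : IsHaarSO n ν)
    {T : EuclideanSpace ℝ n →ₗ[ℝ] EuclideanSpace ℝ n} (hT : LinearMap.det T ≠ 0) {r : ℝ}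
    (hr : 0 ≤ r) {x : EuclideanSpace ℝ n} (hx : x ≠ 0) :
    ν {O | ‖T (toEuclideanLin Oᵀ x)‖ ≤ r * ‖toEuclideanLin Oᵀ x‖} ≤
      ENNReal.ofReal (r ^ Fintype.card n / |LinearMap.det T|) := by
  have hmeas : MeasurableSet {y | ‖T y‖ ≤ r * ‖y‖} :=
    (isClosed_le T.continuous_of_finiteDimensional.norm
      (continuous_const.mul continuous_norm)).measurableSet
  have hcone (c : ℝ) (hc : c ≠ 0) (z : EuclideanSpace ℝ n) :
      c • z ∈ {y | ‖T y‖ ≤ r * ‖y‖} ↔ z ∈ {y | ‖T y‖ ≤ r * ‖y‖} := by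
    rw [Set.mem_ofPred_eq, Set.mem_ofPred_eq, map_smul, norm_smul, norm_smul, mul_left_comm,
      mul_le_mul_iff_right₀ (norm_pos_iff.2 hc)]
  have hsub : {y | ‖T y‖ ≤ r * ‖y‖} ∩ Metric.closedBall 0 1 ⊆ T ⁻¹' Metric.closedBall 0 r := by
    rintro y ⟨hy, hy1⟩
    rw [mem_closedBall_zero_iff] at hy1
    exact mem_closedBall_zero_iff.2 (hy.trans (mul_le_of_le_one_right hr hy1))
  have hpos : volume (Metric.closedBall (0 : EuclideanSpace ℝ n) 1) ≠ 0 :=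
    (Metric.measure_closedBall_pos volume 0 one_pos).ne'
  refine (ENNReal.mul_le_mul_iff_left hpos measure_closedBall_lt_top.ne).1 ?_
  calc ν {O | ‖T (toEuclideanLin Oᵀ x)‖ ≤ r * ‖toEuclideanLin Oᵀ x‖} *
        volume (Metric.closedBall (0 : EuclideanSpace ℝ n) 1)
      = volume ({y | ‖T y‖ ≤ r * ‖y‖} ∩ Metric.closedBall 0 1) :=
        hν.measure_transpose_mem_cone_mul_volume hmeas hcone hx
    _ ≤ volume (T ⁻¹' Metric.closedBall 0 r) := measure_mono hsub
    _ = ENNReal.ofReal (r ^ Fintype.card n / |LinearMap.det T|) *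
          volume (Metric.closedBall (0 : EuclideanSpace ℝ n) 1) := by
        rw [Measure.addHaar_preimage_linearMap _ hT, Measure.addHaar_closedBall' _ _ hr,
          finrank_euclideanSpace, ← mul_assoc, ← ENNReal.ofReal_mul (abs_nonneg _), abs_inv,
          inv_mul_eq_div]

end IsHaarSO

section Blocks

variable {m n : Type*} [Fintype m] [Fintype n]

lemma norm_sq_toLp_sumElim (u : EuclideanSpace ℝ m) (v : EuclideanSpace ℝ n) :
    ‖WithLp.toLp 2 (Sum.elim u.ofLp v.ofLp)‖ ^ 2 = ‖u‖ ^ 2 + ‖v‖ ^ 2 := by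
  simp only [EuclideanSpace.real_norm_sq_eq, Fintype.sum_sum_type, Sum.elim_inl, Sum.elim_inr]

lemma norm_toLp_sumElim_zero (v : EuclideanSpace ℝ n) :
    ‖WithLp.toLp 2 (Sum.elim (0 : EuclideanSpace ℝ m).ofLp v.ofLp)‖ = ‖v‖ := by
  rw [← sq_eq_sq₀ (norm_nonneg _) (norm_nonneg _), norm_sq_toLp_sumElim, norm_zero,
    zero_pow two_ne_zero, zero_add]

variable [DecidableEq m] [DecidableEq n]

lemma toEuclideanLin_fromBlocks_toLp_sumElim {k l : Type*} (A : Matrix k m ℝ) (B : Matrix k n ℝ)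
    (C : Matrix l m ℝ) (D : Matrix l n ℝ) (u : EuclideanSpace ℝ m) (v : EuclideanSpace ℝ n) :
    toEuclideanLin (fromBlocks A B C D) (WithLp.toLp 2 (Sum.elim u.ofLp v.ofLp)) =
      WithLp.toLp 2 (Sum.elim (toEuclideanLin A u + toEuclideanLin B v).ofLp
        (toEuclideanLin C u + toEuclideanLin D v).ofLp) :=
  congrArg (WithLp.toLp 2) (fromBlocks_mulVec A B C D _)

lemma norm_sq_toEuclideanLin_fromBlocks_smul (c : ℝ) (u : EuclideanSpace ℝ m)
    (v : EuclideanSpace ℝ n) :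
    ‖toEuclideanLin (fromBlocks (c • 1 : Matrix m m ℝ) 0 0 (1 : Matrix n n ℝ))
        (WithLp.toLp 2 (Sum.elim u.ofLp v.ofLp))‖ ^ 2 = (c * ‖u‖) ^ 2 + ‖v‖ ^ 2 := by
  simp only [toEuclideanLin_fromBlocks_toLp_sumElim, map_smul, map_zero, toLpLin_one,
    LinearMap.smul_apply, LinearMap.zero_apply, LinearMap.id_apply, add_zero, zero_add,
    norm_sq_toLp_sumElim, norm_smul, mul_pow, Real.norm_eq_abs, sq_abs]

lemma toEuclideanLin_transpose_toLp_sumElim_zero (O : Matrix (m ⊕ n) (m ⊕ n) ℝ)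
    (w : EuclideanSpace ℝ n) :
    toEuclideanLin Oᵀ (WithLp.toLp 2 (Sum.elim (0 : EuclideanSpace ℝ m).ofLp w.ofLp)) =
      WithLp.toLp 2 (Sum.elim (toEuclideanLin O.toBlocks₂₁ᵀ w).ofLp
        (toEuclideanLin O.toBlocks₂₂ᵀ w).ofLp) := by
  conv_lhs => rw [← fromBlocks_toBlocks O]
  rw [fromBlocks_transpose, toEuclideanLin_fromBlocks_toLp_sumElim, map_zero, map_zero, zero_add,
    zero_add]

lemma norm_sq_transpose_toBlocks_add {O : Matrix (m ⊕ n) (m ⊕ n) ℝ} (hO : Oᵀ * O = 1)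
    (w : EuclideanSpace ℝ n) :
    ‖toEuclideanLin O.toBlocks₂₁ᵀ w‖ ^ 2 + ‖toEuclideanLin O.toBlocks₂₂ᵀ w‖ ^ 2 = ‖w‖ ^ 2 := by
  rw [← norm_sq_toLp_sumElim, ← toEuclideanLin_transpose_toLp_sumElim_zero,
    forall_norm_toEuclideanLin_eq_iff.2
      (show Oᵀᵀ * Oᵀ = 1 by rw [transpose_transpose, mul_eq_one_comm.1 hO]),
    norm_toLp_sumElim_zero]

lemma IsHaarSO.measure_norm_transpose_toBlocks₂₁_le {ν : Measure (Matrix (m ⊕ n) (m ⊕ n) ℝ)}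
    (hν : IsHaarSO (m ⊕ n) ν) {r : ℝ} (hr : 0 < r) {w : EuclideanSpace ℝ n} (hw : w ≠ 0) :
    ν {O | ‖toEuclideanLin O.toBlocks₂₁ᵀ w‖ ≤ r * ‖w‖} ≤
      ENNReal.ofReal (2 ^ (Fintype.card m + Fintype.card n) * r ^ Fintype.card m) := by
  set x := WithLp.toLp 2 (Sum.elim (0 : EuclideanSpace ℝ m).ofLp w.ofLp) with hx
  have hxw : ‖x‖ = ‖w‖ := norm_toLp_sumElim_zero w
  have hx0 : x ≠ 0 := norm_ne_zero_iff.1 (hxw ▸ norm_ne_zero_iff.2 hw)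
  set T := toEuclideanLin (fromBlocks (r⁻¹ • 1 : Matrix m m ℝ) 0 0 (1 : Matrix n n ℝ)) with hT
  have hdet : LinearMap.det T = r⁻¹ ^ Fintype.card m := by
    rw [hT, det_toEuclideanLin, det_fromBlocks_zero₂₁, det_smul, det_one, det_one, mul_one, mul_one]
  have hdet_pos : 0 < LinearMap.det T := by
    rw [hdet]
    positivity
  have hsub : ∀ᵐ O ∂ν, ‖toEuclideanLin O.toBlocks₂₁ᵀ w‖ ≤ r * ‖w‖ →
      ‖T (toEuclideanLin Oᵀ x)‖ ≤ 2 * ‖toEuclideanLin Oᵀ x‖ := by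
    filter_upwards [hν.2.1] with O hO hle
    have huv := norm_sq_transpose_toBlocks_add hO.1 w
    have hu : r⁻¹ * ‖toEuclideanLin O.toBlocks₂₁ᵀ w‖ ≤ ‖w‖ := (inv_mul_le_iff₀ hr).2 hle
    refine le_of_sq_le_sq ?_ (by positivity)
    rw [hx, toEuclideanLin_transpose_toLp_sumElim_zero, hT, norm_sq_toEuclideanLin_fromBlocks_smul,
      mul_pow 2, norm_sq_toLp_sumElim, huv]
    nlinarith [pow_le_pow_left₀ (by positivity) hu 2,
      sq_nonneg ‖toEuclideanLin O.toBlocks₂₁ᵀ w‖]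
  calc ν {O | ‖toEuclideanLin O.toBlocks₂₁ᵀ w‖ ≤ r * ‖w‖}
      ≤ ν {O | ‖T (toEuclideanLin Oᵀ x)‖ ≤ 2 * ‖toEuclideanLin Oᵀ x‖} := measure_mono_ae hsub
    _ ≤ ENNReal.ofReal (2 ^ Fintype.card (m ⊕ n) / |LinearMap.det T|) :=
        hν.measure_norm_apply_transpose_le hdet_pos.ne' zero_le_two hx0
    _ = ENNReal.ofReal (2 ^ (Fintype.card m + Fintype.card n) * r ^ Fintype.card m) := by
        rw [abs_of_pos hdet_pos, hdet, Fintype.card_sum, inv_pow, div_inv_eq_mul]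

end Blocks

section UnitVectors

variable {Ω E F : Type*} [NormedAddCommGroup E] [NormedSpace ℝ E] [SeminormedAddCommGroup F]
  [NormedSpace ℝ F]

lemma closedBall_subset_norm_apply_le {T : E →ₗ[ℝ] F} (hT : ∀ v, ‖T v‖ ≤ ‖v‖) {t : ℝ}
    (ht' : t ≤ 1 / 2) {w : E} (hw : ‖w‖ = 1) (hTw : ‖T w‖ ≤ t) :
    Metric.closedBall w t ⊆
      {v | v ∈ Metric.closedBall 0 2 \ {0} ∧ ‖T v‖ ≤ 4 * t * ‖v‖} := by
  intro v hv
  rw [mem_closedBall_iff_norm] at hv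
  have hlow : 1 / 2 ≤ ‖v‖ := by
    have := norm_sub_norm_le w v
    rw [norm_sub_rev] at this
    linarith
  have hupp : ‖v‖ ≤ 2 := by
    have := norm_sub_norm_le v w
    linarith
  have hTv : ‖T v‖ ≤ 2 * t := by
    calc ‖T v‖ = ‖T (v - w) + T w‖ := by rw [← map_add, sub_add_cancel]
      _ ≤ ‖v - w‖ + ‖T w‖ := (norm_add_le _ _).trans (add_le_add_left (hT _) _)
      _ ≤ 2 * t := by linarith
  refine ⟨⟨mem_closedBall_zero_iff.2 hupp, norm_pos_iff.1 (by linarith)⟩, ?_⟩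
  nlinarith [(norm_nonneg _).trans hv]

lemma mul_measure_le_measure_section_le {X Y : Type*} [MeasurableSpace X] [MeasurableSpace Y]
    {P : Measure X} {μ : Measure Y} [SFinite P] [SFinite μ] {G : Set (X × Y)}
    (hG : MeasurableSet G) {B : Set Y} (hGB : ∀ p ∈ G, p.2 ∈ B) {q : ENNReal}
    (hq : ∀ y ∈ B, P ((fun x => (x, y)) ⁻¹' G) ≤ q) (c : ENNReal) :
    c * P {x | c ≤ μ (Prod.mk x ⁻¹' G)} ≤ q * μ B := by
  have hsection (y : Y) : P ((fun x => (x, y)) ⁻¹' G) ≤ B.indicator (fun _ => q) y := by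
    by_cases hy : y ∈ B
    · rw [Set.indicator_of_mem hy]
      exact hq y hy
    · have hempty : (fun x => (x, y)) ⁻¹' G = ∅ :=
        Set.eq_empty_of_forall_notMem fun x hx => hy (hGB (x, y) hx)
      rw [hempty, measure_empty]
      exact zero_le
  calc c * P {x | c ≤ μ (Prod.mk x ⁻¹' G)} ≤ ∫⁻ x, μ (Prod.mk x ⁻¹' G) ∂P :=
        mul_meas_ge_le_lintegral (measurable_measure_prodMk_left hG) c
    _ = ∫⁻ y, P ((fun x => (x, y)) ⁻¹' G) ∂μ := by
        rw [← Measure.prod_apply hG, Measure.prod_apply_symm hG]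
    _ ≤ ∫⁻ y, B.indicator (fun _ => q) y ∂μ := lintegral_mono hsection
    _ ≤ q * μ B := lintegral_indicator_const_le B q

/-- A volumetric substitute for a net: one unit vector shrunk to norm at most `t` forces a whole
ball of vectors to be shrunk, which Fubini's theorem and Markov's inequality make unlikely. -/
lemma measure_exists_unit_vector_norm_apply_le [MeasurableSpace Ω] {P : Measure Ω} [SFinite P]
    [FiniteDimensional ℝ E] [MeasurableSpace E] [BorelSpace E] {T : Ω → E →ₗ[ℝ] F}
    (hT : Measurable fun p : Ω × E => ‖T p.1 p.2‖) {q : ENNReal} {t : ℝ} (ht : 0 < t)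
    (ht' : t ≤ 1 / 2) (hq : ∀ v ≠ 0, P {ω | ‖T ω v‖ ≤ 4 * t * ‖v‖} ≤ q) :
    P {ω | (∀ v, ‖T ω v‖ ≤ ‖v‖) ∧ ∃ w, ‖w‖ = 1 ∧ ‖T ω w‖ ≤ t} ≤
      q * ENNReal.ofReal ((2 / t) ^ Module.finrank ℝ E) := by
  let μ : Measure E := Measure.addHaar
  set d := Module.finrank ℝ E
  set V := μ (Metric.closedBall 0 1)
  have hball (w : E) {s : ℝ} (hs : 0 ≤ s) :
      μ (Metric.closedBall w s) = ENNReal.ofReal (s ^ d) * V :=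
    Measure.addHaar_closedBall' μ w hs
  let G : Set (Ω × E) := {p | p.2 ∈ Metric.closedBall 0 2 \ {0} ∧ ‖T p.1 p.2‖ ≤ 4 * t * ‖p.2‖}
  have hG : MeasurableSet G :=
    (measurable_snd
      (Metric.isClosed_closedBall.measurableSet.diff (measurableSet_singleton 0))).inter
        (measurableSet_le hT (measurable_snd.norm.const_mul _))
  have hc : ENNReal.ofReal (t ^ d) * V ≠ 0 :=
    (ENNReal.mul_pos (ENNReal.ofReal_pos.2 (pow_pos ht d)).ne'
      (Metric.measure_closedBall_pos μ 0 one_pos).ne').ne'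
  have hc' : ENNReal.ofReal (t ^ d) * V ≠ ⊤ :=
    ENNReal.mul_ne_top ENNReal.ofReal_ne_top measure_closedBall_lt_top.ne
  refine (ENNReal.mul_le_mul_iff_right hc hc').1 ?_
  calc _ ≤ ENNReal.ofReal (t ^ d) * V *
          P {ω | ENNReal.ofReal (t ^ d) * V ≤ μ (Prod.mk ω ⁻¹' G)} := by
        refine mul_le_mul_right (measure_mono ?_) _
        rintro ω ⟨hle, w, hw, hwt⟩
        rw [Set.mem_ofPred_eq, ← hball w ht.le]
        exact measure_mono (closedBall_subset_norm_apply_le hle ht' hw hwt)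
    _ ≤ q * μ (Metric.closedBall 0 2 \ {0}) :=
        mul_measure_le_measure_section_le hG (fun _ hp => hp.1)
          (fun v hv => (measure_mono fun _ hω => hω.2).trans (hq v hv.2)) _
    _ ≤ q * (ENNReal.ofReal (2 ^ d) * V) := by
        rw [← hball 0 zero_le_two]
        exact mul_le_mul_right (measure_mono Set.sdiff_subset) q
    _ = ENNReal.ofReal (t ^ d) * V * (q * ENNReal.ofReal ((2 / t) ^ d)) := by
        rw [show (2 : ℝ) ^ d = t ^ d * (2 / t) ^ d by rw [← mul_pow, mul_div_cancel₀ _ ht.ne'],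
          ENNReal.ofReal_mul (pow_nonneg ht.le d)]
        ring

end UnitVectors

lemma IsHaarSO.measure_exists_norm_transpose_toBlocks₂₁_le {m n : Type*} [Fintype m] [Fintype n]
    [DecidableEq m] [DecidableEq n] {ν : Measure (Matrix (m ⊕ n) (m ⊕ n) ℝ)}
    (hν : IsHaarSO (m ⊕ n) ν) {t : ℝ} (ht : 0 < t) (ht' : t ≤ 1 / 2) :
    ν {O | ∃ w, ‖w‖ = 1 ∧ ‖toEuclideanLin O.toBlocks₂₁ᵀ w‖ ≤ t} ≤
      ENNReal.ofReal ((4 / t) ^ Fintype.card n * (8 * t) ^ Fintype.card m) := by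
  have := hν.1
  have hblock : Continuous fun O : Matrix (m ⊕ n) (m ⊕ n) ℝ => O.toBlocks₂₁ᵀ :=
    (continuous_id.matrix_submatrix Sum.inr Sum.inl).matrix_transpose
  have hmeas : Measurable fun p : Matrix (m ⊕ n) (m ⊕ n) ℝ × EuclideanSpace ℝ n =>
      ‖toEuclideanLin p.1.toBlocks₂₁ᵀ p.2‖ :=
    (continuous_toEuclideanLin_apply (hblock.comp continuous_fst) continuous_snd).norm.measurable
  have hsub : ∀ᵐ O ∂ν, (∃ w, ‖w‖ = 1 ∧ ‖toEuclideanLin O.toBlocks₂₁ᵀ w‖ ≤ t) →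
      (∀ w, ‖toEuclideanLin O.toBlocks₂₁ᵀ w‖ ≤ ‖w‖) ∧
        ∃ w, ‖w‖ = 1 ∧ ‖toEuclideanLin O.toBlocks₂₁ᵀ w‖ ≤ t := by
    filter_upwards [hν.2.1] with O hO hw
    refine ⟨fun w => le_of_sq_le_sq ?_ (norm_nonneg w), hw⟩
    exact le_of_add_le_of_nonneg_left (norm_sq_transpose_toBlocks_add hO.1 w).le (sq_nonneg _)
  refine (measure_mono_ae hsub).trans ((measure_exists_unit_vector_norm_apply_le hmeas ht ht'
    fun w hw => hν.measure_norm_transpose_toBlocks₂₁_le (by positivity) hw).trans_eq ?_)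
  rw [finrank_euclideanSpace, ← ENNReal.ofReal_mul (by positivity)]
  congr 1
  rw [show 8 * t = 2 * (4 * t) by ring, show 4 / t = 2 * (2 / t) by ring, mul_pow 2 (4 * t),
    mul_pow 2 (2 / t), pow_add]
  ring

lemma exists_pow_mul_pow_le_half_pow {c : ℝ} (hc : 0 < c) :
    ∃ t : ℝ, 0 < t ∧ t ≤ 1 / 2 ∧ ∀ M N : ℕ, (1 + c) * N ≤ M →
      (4 / t) ^ N * (8 * t) ^ M ≤ (1 / 2) ^ N := by
  obtain ⟨s, hs0, hs1, hsc⟩ : ∃ s : ℝ, 0 < s ∧ s ≤ 1 ∧ s ^ c = 1 / 64 :=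
    ⟨(1 / 64) ^ c⁻¹, by positivity,
      Real.rpow_le_one (by norm_num) (by norm_num) (inv_nonneg.2 hc.le),
      Real.rpow_inv_rpow (by norm_num) hc.ne'⟩
  refine ⟨s / 8, by positivity, by linarith, fun M N hMN => ?_⟩
  have hpow : s ^ M ≤ (s * (1 / 64)) ^ N := by
    calc s ^ M = s ^ (M : ℝ) := (Real.rpow_natCast s M).symm
      _ ≤ s ^ ((1 + c) * N) := Real.rpow_le_rpow_of_exponent_ge hs0 hs1 hMN
      _ = (s * (1 / 64)) ^ N := by
        rw [Real.rpow_mul hs0.le, Real.rpow_natCast, Real.rpow_add hs0, Real.rpow_one, hsc]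
  calc (4 / (s / 8)) ^ N * (8 * (s / 8)) ^ M = (32 / s) ^ N * s ^ M := by
        rw [mul_div_cancel₀ s (by norm_num), div_div_eq_mul_div]
        norm_num
    _ ≤ (32 / s) ^ N * (s * (1 / 64)) ^ N := by gcongr
    _ = (1 / 2) ^ N := by
        rw [← mul_pow]
        congr 1
        field_simp
        norm_num

lemma tendsto_measure_one_of_diff_subset {ι : Type*} {l : Filter ι} {Ω : ι → Type*}
    [∀ i, MeasurableSpace (Ω i)] {P : ∀ i, Measure (Ω i)} [∀ i, IsProbabilityMeasure (P i)]
    {s t u : ∀ i, Set (Ω i)} (hs : Tendsto (fun i => P i (s i)) l (nhds 1))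
    (ht : Tendsto (fun i => P i (t i)) l (nhds 0)) (hsub : ∀ᶠ i in l, s i \ t i ⊆ u i) :
    Tendsto (fun i => P i (u i)) l (nhds 1) := by
  have hdiff := ENNReal.Tendsto.sub hs ht (Or.inl ENNReal.one_ne_top)
  rw [tsub_zero] at hdiff
  refine tendsto_of_tendsto_of_tendsto_of_le_of_le' hdiff tendsto_const_nhds ?_
    (Eventually.of_forall fun i => prob_le_one)
  exact hsub.mono fun i hi => le_measure_sdiff.trans (measure_mono hi)

lemma eventually_mul_rpow_lt_rpow (L : ℝ) {a b : ℝ} (hab : a < b) :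
    ∀ᶠ N : ℕ in atTop, L * (N : ℝ) ^ a < (N : ℝ) ^ b := by
  have hlim : Tendsto (fun N : ℕ => (N : ℝ) ^ (b - a)) atTop atTop :=
    (tendsto_rpow_atTop (sub_pos.2 hab)).comp tendsto_natCast_atTop_atTop
  filter_upwards [hlim.eventually_gt_atTop L, eventually_gt_atTop 0] with N hL hN
  have hN' : (0 : ℝ) < N := Nat.cast_pos.2 hN
  calc L * (N : ℝ) ^ a < (N : ℝ) ^ (b - a) * (N : ℝ) ^ a :=
        mul_lt_mul_of_pos_right hL (Real.rpow_pos_of_pos hN' a)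
    _ = (N : ℝ) ^ b := by rw [← Real.rpow_add hN', sub_add_cancel]

section OperatorNorm

open scoped Matrix.Norms.L2Operator

lemma specNorm_eq_l2_opNorm {m n : Type*} [Fintype m] [Fintype n] [DecidableEq n]
    (A : Matrix m n ℝ) : specNorm A = ‖A‖ :=
  rfl

section Blocks

variable {m n : Type*} [Fintype m] [Fintype n] [DecidableEq n]

lemma l2_opNorm_le_one_of_transpose_mul_self {A : Matrix m n ℝ} (hA : Aᵀ * A = 1) : ‖A‖ ≤ 1 :=
  ContinuousLinearMap.opNorm_le_bound _ zero_le_one fun x => by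
    rw [one_mul]
    exact (forall_norm_toEuclideanLin_eq_iff.2 hA x).le

variable [DecidableEq m]

lemma l2_opNorm_toBlocks₂₂_le_sqrt {O : Matrix (m ⊕ n) (m ⊕ n) ℝ} (hO : Oᵀ * O = 1) {t : ℝ}
    (ht : 0 ≤ t) (h : ∀ w, ‖w‖ = 1 → t ≤ ‖toEuclideanLin O.toBlocks₂₁ᵀ w‖) :
    ‖O.toBlocks₂₂‖ ≤ √(1 - t ^ 2) := by
  rw [← l2_opNorm_conjTranspose, conjTranspose_eq_transpose_of_trivial]
  refine ContinuousLinearMap.opNorm_le_of_unit_norm (Real.sqrt_nonneg _) fun w hw => ?_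
  have hsum := norm_sq_transpose_toBlocks_add hO w
  rw [hw, one_pow] at hsum
  have hsq : t ^ 2 ≤ ‖toEuclideanLin O.toBlocks₂₁ᵀ w‖ ^ 2 := pow_le_pow_left₀ ht (h w hw) 2
  exact Real.le_sqrt_of_sq_le (by linarith : ‖toEuclideanLin O.toBlocks₂₂ᵀ w‖ ^ 2 ≤ 1 - t ^ 2)

lemma IsHaarSO.measure_compl_norm_toBlocks₂₂_le_sqrt {ν : Measure (Matrix (m ⊕ n) (m ⊕ n) ℝ)}
    (hν : IsHaarSO (m ⊕ n) ν) {t : ℝ} (ht : 0 < t) (ht' : t ≤ 1 / 2) :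
    ν {O | ‖O‖ ≤ 1 ∧ ‖O.toBlocks₂₂‖ ≤ √(1 - t ^ 2)}ᶜ ≤
      ENNReal.ofReal ((4 / t) ^ Fintype.card n * (8 * t) ^ Fintype.card m) := by
  have hsub : ∀ᵐ O ∂ν, ¬(‖O‖ ≤ 1 ∧ ‖O.toBlocks₂₂‖ ≤ √(1 - t ^ 2)) →
      ∃ w, ‖w‖ = 1 ∧ ‖toEuclideanLin O.toBlocks₂₁ᵀ w‖ ≤ t := by
    filter_upwards [hν.2.1] with O hO
    contrapose!
    exact fun h => ⟨l2_opNorm_le_one_of_transpose_mul_self hO.1,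
      l2_opNorm_toBlocks₂₂_le_sqrt hO.1 ht.le fun w hw => (h w hw).le⟩
  exact (measure_mono_ae hsub).trans (hν.measure_exists_norm_transpose_toBlocks₂₁_le ht ht')

end Blocks

lemma l2_opNorm_submatrix_id_le {𝕜 k m n : Type*} [RCLike 𝕜] [Fintype k] [Fintype m] [Fintype n]
    [DecidableEq n] (A : Matrix m n 𝕜) {f : k → m} (hf : Function.Injective f) :
    ‖A.submatrix f id‖ ≤ ‖A‖ := by
  refine ContinuousLinearMap.opNorm_le_bound _ (norm_nonneg A) fun x => ?_
  refine le_trans ?_ (l2_opNorm_mulVec A x)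
  rw [EuclideanSpace.norm_eq, EuclideanSpace.norm_eq]
  refine Real.sqrt_le_sqrt ?_
  calc ∑ i, ‖(A *ᵥ x.ofLp) (f i)‖ ^ 2
      = ∑ j ∈ Finset.univ.map ⟨f, hf⟩, ‖(A *ᵥ x.ofLp) j‖ ^ 2 :=
        (Finset.sum_map Finset.univ ⟨f, hf⟩ fun j => ‖(A *ᵥ x.ofLp) j‖ ^ 2).symm
    _ ≤ ∑ j, ‖(A *ᵥ x.ofLp) j‖ ^ 2 :=
        Finset.sum_le_univ_sum_of_nonneg fun j => sq_nonneg _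

lemma l2_opNorm_submatrix_le {𝕜 k l m n : Type*} [RCLike 𝕜] [Fintype k] [Fintype l] [Fintype m]
    [Fintype n] [DecidableEq l] [DecidableEq n] (A : Matrix m n 𝕜) {f : k → m} {g : l → n}
    (hf : Function.Injective f) (hg : Function.Injective g) : ‖A.submatrix f g‖ ≤ ‖A‖ := by
  classical
  calc ‖A.submatrix f g‖ ≤ ‖A.submatrix id g‖ := l2_opNorm_submatrix_id_le (A.submatrix id g) hf
    _ = ‖Aᴴ.submatrix g id‖ := by rw [← l2_opNorm_conjTranspose, conjTranspose_submatrix]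
    _ ≤ ‖Aᴴ‖ := l2_opNorm_submatrix_id_le Aᴴ hg
    _ = ‖A‖ := l2_opNorm_conjTranspose A

section Inverse

variable {n : Type*} [Fintype n] [DecidableEq n] {D : Matrix n n ℝ}

lemma isUnit_det_one_add_of_l2_opNorm_lt_one (hD : ‖D‖ < 1) : IsUnit (1 + D).det := by
  rw [← isUnit_iff_isUnit_det, ← sub_neg_eq_add]
  exact isUnit_one_sub_of_norm_lt_one (by rwa [norm_neg])

lemma l2_opNorm_one_add_inv_le {δ : ℝ} (hδ : 0 < δ) (hD : ‖D‖ ≤ 1 - δ) :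
    ‖(1 + D)⁻¹‖ ≤ 1 / δ := by
  have hone : ‖(1 : Matrix n n ℝ)‖ ≤ 1 :=
    l2_opNorm_le_one_of_transpose_mul_self (by rw [transpose_one, one_mul])
  have hinv : (1 + D)⁻¹ = 1 - D * (1 + D)⁻¹ := by
    rw [eq_sub_iff_add_eq, ← one_add_mul,
      mul_nonsing_inv _ (isUnit_det_one_add_of_l2_opNorm_lt_one (by linarith))]
  have hbound : ‖(1 + D)⁻¹‖ ≤ 1 + (1 - δ) * ‖(1 + D)⁻¹‖ := by
    calc ‖(1 + D)⁻¹‖ = ‖1 - D * (1 + D)⁻¹‖ := by rw [← hinv]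
      _ ≤ 1 + (1 - δ) * ‖(1 + D)⁻¹‖ := by grw [norm_sub_le, l2_opNorm_mul, hone, hD]
  rw [le_div_iff₀ hδ]
  linarith

end Inverse

section Schur

/-- With `X = B₁ (1 + D₁)⁻¹` and `Y = (1 + D₂)⁻¹ C₂`, the right side is the block product
`[1, -X] (O₁ - O₂) [1; -Y]`. -/
lemma schurLike_sub_schurLike {M N : ℕ} {O₁ O₂ : Matrix (Fin M ⊕ Fin N) (Fin M ⊕ Fin N) ℝ}
    (h₁ : IsUnit (1 + O₁.toBlocks₂₂).det) (h₂ : IsUnit (1 + O₂.toBlocks₂₂).det) :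
    schurLike O₁ - schurLike O₂ =
      (O₁ - O₂).toBlocks₁₁ - O₁.toBlocks₁₂ * (1 + O₁.toBlocks₂₂)⁻¹ * (O₁ - O₂).toBlocks₂₁ -
        ((O₁ - O₂).toBlocks₁₂ - O₁.toBlocks₁₂ * (1 + O₁.toBlocks₂₂)⁻¹ * (O₁ - O₂).toBlocks₂₂) *
          ((1 + O₂.toBlocks₂₂)⁻¹ * O₂.toBlocks₂₁) := by
  have hresolvent : (1 + O₁.toBlocks₂₂)⁻¹ * (O₁ - O₂).toBlocks₂₂ * (1 + O₂.toBlocks₂₂)⁻¹ =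
      (1 + O₂.toBlocks₂₂)⁻¹ - (1 + O₁.toBlocks₂₂)⁻¹ := by
    rw [show (O₁ - O₂).toBlocks₂₂ = (1 + O₁.toBlocks₂₂) - (1 + O₂.toBlocks₂₂) from
      (add_sub_add_left_eq_sub _ _ _).symm, mul_sub, sub_mul, nonsing_inv_mul _ h₁, one_mul,
      mul_assoc, mul_nonsing_inv _ h₂, mul_one]
  have hassoc : O₁.toBlocks₁₂ * (1 + O₁.toBlocks₂₂)⁻¹ * (O₁ - O₂).toBlocks₂₂ *
      ((1 + O₂.toBlocks₂₂)⁻¹ * O₂.toBlocks₂₁) =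
        O₁.toBlocks₁₂ * ((1 + O₁.toBlocks₂₂)⁻¹ * (O₁ - O₂).toBlocks₂₂ * (1 + O₂.toBlocks₂₂)⁻¹) *
          O₂.toBlocks₂₁ := by
    simp only [Matrix.mul_assoc]
  rw [Matrix.sub_mul, hassoc, hresolvent,
    show (O₁ - O₂).toBlocks₁₁ = O₁.toBlocks₁₁ - O₂.toBlocks₁₁ from rfl,
    show (O₁ - O₂).toBlocks₁₂ = O₁.toBlocks₁₂ - O₂.toBlocks₁₂ from rfl,
    show (O₁ - O₂).toBlocks₂₁ = O₁.toBlocks₂₁ - O₂.toBlocks₂₁ from rfl]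
  simp only [schurLike, Matrix.mul_sub, Matrix.sub_mul, Matrix.mul_assoc]
  abel

lemma norm_toBlocks₁₁_sub_mul_sub_mul_le {k l m n : Type*} [Fintype k] [Fintype l] [Fintype m]
    [Fintype n] [DecidableEq l] [DecidableEq m] [DecidableEq n]
    (E : Matrix (k ⊕ l) (m ⊕ n) ℝ) (X : Matrix k l ℝ) (Y : Matrix n m ℝ) :
    ‖E.toBlocks₁₁ - X * E.toBlocks₂₁ - (E.toBlocks₁₂ - X * E.toBlocks₂₂) * Y‖ ≤
      (1 + ‖X‖) * (1 + ‖Y‖) * ‖E‖ := by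
  have hE₁₁ : ‖E.toBlocks₁₁‖ ≤ ‖E‖ := l2_opNorm_submatrix_le E Sum.inl_injective Sum.inl_injective
  have hE₁₂ : ‖E.toBlocks₁₂‖ ≤ ‖E‖ := l2_opNorm_submatrix_le E Sum.inl_injective Sum.inr_injective
  have hE₂₁ : ‖E.toBlocks₂₁‖ ≤ ‖E‖ := l2_opNorm_submatrix_le E Sum.inr_injective Sum.inl_injective
  have hE₂₂ : ‖E.toBlocks₂₂‖ ≤ ‖E‖ := l2_opNorm_submatrix_le E Sum.inr_injective Sum.inr_injective
  calc _ ≤ ‖E.toBlocks₁₁‖ + ‖X‖ * ‖E.toBlocks₂₁‖ +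
        (‖E.toBlocks₁₂‖ + ‖X‖ * ‖E.toBlocks₂₂‖) * ‖Y‖ := by
        grw [norm_sub_le, norm_sub_le, l2_opNorm_mul, l2_opNorm_mul, norm_sub_le, l2_opNorm_mul]
    _ ≤ ‖E‖ + ‖X‖ * ‖E‖ + (‖E‖ + ‖X‖ * ‖E‖) * ‖Y‖ := by gcongr
    _ = (1 + ‖X‖) * (1 + ‖Y‖) * ‖E‖ := by ring

lemma norm_schurLike_sub_le {M N : ℕ} {O₁ O₂ : Matrix (Fin M ⊕ Fin N) (Fin M ⊕ Fin N) ℝ} {δ : ℝ}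
    (hδ : 0 < δ) (hO₁ : ‖O₁‖ ≤ 1) (hD₁ : ‖O₁.toBlocks₂₂‖ ≤ 1 - δ) (hsub : ‖O₁ - O₂‖ ≤ δ / 2) :
    ‖schurLike O₁ - schurLike O₂‖ ≤ (1 + 1 / δ) * (1 + 4 / δ) * ‖O₁ - O₂‖ := by
  have hO₂ : ‖O₂‖ ≤ 2 := by
    linarith [norm_sub_norm_le O₂ O₁, norm_sub_rev O₁ O₂, norm_nonneg O₁.toBlocks₂₂]
  have hB₁ : ‖O₁.toBlocks₁₂‖ ≤ 1 :=
    (l2_opNorm_submatrix_le O₁ Sum.inl_injective Sum.inr_injective).trans hO₁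
  have hC₂ : ‖O₂.toBlocks₂₁‖ ≤ 2 :=
    (l2_opNorm_submatrix_le O₂ Sum.inr_injective Sum.inl_injective).trans hO₂
  have hD₂ : ‖O₂.toBlocks₂₂‖ ≤ 1 - δ / 2 := by
    have hD : ‖O₁.toBlocks₂₂ - O₂.toBlocks₂₂‖ ≤ δ / 2 :=
      (l2_opNorm_submatrix_le (O₁ - O₂) Sum.inr_injective Sum.inr_injective).trans hsub
    linarith [norm_sub_norm_le O₂.toBlocks₂₂ O₁.toBlocks₂₂,
      norm_sub_rev O₁.toBlocks₂₂ O₂.toBlocks₂₂]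
  have hR₁ : ‖(1 + O₁.toBlocks₂₂)⁻¹‖ ≤ 1 / δ := l2_opNorm_one_add_inv_le hδ hD₁
  have hR₂ : ‖(1 + O₂.toBlocks₂₂)⁻¹‖ ≤ 1 / (δ / 2) :=
    l2_opNorm_one_add_inv_le (half_pos hδ) hD₂
  rw [schurLike_sub_schurLike (isUnit_det_one_add_of_l2_opNorm_lt_one (by linarith))
    (isUnit_det_one_add_of_l2_opNorm_lt_one (by linarith))]
  calc _ ≤ (1 + ‖O₁.toBlocks₁₂ * (1 + O₁.toBlocks₂₂)⁻¹‖) *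
        (1 + ‖(1 + O₂.toBlocks₂₂)⁻¹ * O₂.toBlocks₂₁‖) * ‖O₁ - O₂‖ :=
        norm_toBlocks₁₁_sub_mul_sub_mul_le _ _ _
    _ ≤ (1 + 1 * (1 / δ)) * (1 + 1 / (δ / 2) * 2) * ‖O₁ - O₂‖ := by
        grw [l2_opNorm_mul, l2_opNorm_mul, hB₁, hR₁, hR₂, hC₂]
    _ = (1 + 1 / δ) * (1 + 4 / δ) * ‖O₁ - O₂‖ := by ring

lemma eventually_norm_schurLike_sub_lt {δ η ε : ℝ} (hδ : 0 < δ) (hη : η < 1) (hηε : η < ε) :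
    ∀ᶠ N : ℕ in atTop, ∀ {M : ℕ} {O₁ O₂ : Matrix (Fin M ⊕ Fin N) (Fin M ⊕ Fin N) ℝ},
      ‖O₁‖ ≤ 1 → ‖O₁.toBlocks₂₂‖ ≤ 1 - δ → ‖O₁ - O₂‖ < (N : ℝ) ^ (-1 + η) →
        ‖schurLike O₁ - schurLike O₂‖ < (N : ℝ) ^ (-1 + ε) := by
  filter_upwards [eventually_mul_rpow_lt_rpow ((1 + 1 / δ) * (1 + 4 / δ))
    (add_lt_add_right hηε (-1)), eventually_mul_rpow_lt_rpow (2 / δ)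
    (by linarith : -1 + η < 0)] with N hgrow hsmall M O₁ O₂ hO₁ hD₁ hsub
  have hsub' : ‖O₁ - O₂‖ ≤ δ / 2 := by
    rw [Real.rpow_zero, div_mul_eq_mul_div, div_lt_one hδ] at hsmall
    linarith
  calc ‖schurLike O₁ - schurLike O₂‖ ≤ (1 + 1 / δ) * (1 + 4 / δ) * ‖O₁ - O₂‖ :=
        norm_schurLike_sub_le hδ hO₁ hD₁ hsub'
    _ ≤ (1 + 1 / δ) * (1 + 4 / δ) * (N : ℝ) ^ (-1 + η) := by gcongr
    _ < (N : ℝ) ^ (-1 + ε) := hgrow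

end Schur

lemma IsHaarSO.exists_measure_compl_norm_toBlocks₂₂_le {c : ℝ} (hc : 0 < c) :
    ∃ δ : ℝ, 0 < δ ∧ ∀ {M N : ℕ} {ν : Measure (Matrix (Fin M ⊕ Fin N) (Fin M ⊕ Fin N) ℝ)},
      IsHaarSO (Fin M ⊕ Fin N) ν → (1 + c) * N ≤ M →
        ν {O | ‖O‖ ≤ 1 ∧ ‖O.toBlocks₂₂‖ ≤ 1 - δ}ᶜ ≤ ENNReal.ofReal ((1 / 2) ^ N) := by
  obtain ⟨t, ht, ht', hpow⟩ := exists_pow_mul_pow_le_half_pow hc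
  have hsqrt : √(1 - t ^ 2) < 1 := by
    rw [Real.sqrt_lt' one_pos]
    linarith [sq_pos_of_pos ht]
  refine ⟨1 - √(1 - t ^ 2), sub_pos.2 hsqrt, fun hν hMN => ?_⟩
  rw [sub_sub_cancel]
  refine (hν.measure_compl_norm_toBlocks₂₂_le_sqrt ht ht').trans (ENNReal.ofReal_le_ofReal ?_)
  rw [Fintype.card_fin, Fintype.card_fin]
  exact hpow _ _ hMN

theorem schur_blocks_match_general {c : ℝ} (hc : 0 < c) (M : ℕ → ℕ)
    (hM : ∀ᶠ N : ℕ in atTop, (1 + c) * N ≤ M N) (Ω : ℕ → Type*)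
    [∀ N, MeasurableSpace (Ω N)] (P : ∀ N, Measure (Ω N))
    (O₁ O₂ : ∀ N : ℕ, Ω N → Matrix (Fin (M N) ⊕ Fin N) (Fin (M N) ⊕ Fin N) ℝ)
    (hHaar : ∀ N, IsHaarSO (Fin (M N) ⊕ Fin N) ((P N).map (O₁ N)))
    (hclose : ∀ ε > (0 : ℝ),
      Tendsto (fun N : ℕ => P N {ω | specNorm (O₁ N ω - O₂ N ω) < (N : ℝ) ^ (-1 + ε)})
        atTop (nhds 1))
    (ε : ℝ) (hε : 0 < ε) :
    Tendsto
      (fun N : ℕ =>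
        P N {ω | specNorm (schurLike (O₁ N ω) - schurLike (O₂ N ω)) < (N : ℝ) ^ (-1 + ε)})
      atTop (nhds 1) := by
  simp only [specNorm_eq_l2_opNorm] at hclose ⊢
  obtain ⟨δ, hδ, hgap⟩ := IsHaarSO.exists_measure_compl_norm_toBlocks₂₂_le hc
  have hmeas (N : ℕ) : AEMeasurable (O₁ N) (P N) := by
    have := (hHaar N).1
    exact aemeasurable_of_map_neZero inferInstance
  have (N : ℕ) : IsProbabilityMeasure (P N) := by
    have := (hHaar N).1
    exact Measure.isProbabilityMeasure_of_map (O₁ N)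
  obtain ⟨η, hη, hηε, hη1⟩ : ∃ η : ℝ, 0 < η ∧ η < ε ∧ η < 1 := by
    obtain ⟨η, hη, hη'⟩ := exists_between (lt_min hε one_pos)
    exact ⟨η, hη, lt_min_iff.1 hη'⟩
  refine tendsto_measure_one_of_diff_subset (hclose η hη)
    (t := fun N => O₁ N ⁻¹' {O | ‖O‖ ≤ 1 ∧ ‖O.toBlocks₂₂‖ ≤ 1 - δ}ᶜ) ?_ ?_
  · have hzero : Tendsto (fun N : ℕ => ENNReal.ofReal ((1 / 2) ^ N)) atTop (nhds 0) := by
      simpa only [ENNReal.ofReal_zero] using ENNReal.tendsto_ofReal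
        (tendsto_pow_atTop_nhds_zero_of_lt_one (by norm_num : (0 : ℝ) ≤ 1 / 2) (by norm_num))
    refine tendsto_of_tendsto_of_tendsto_of_le_of_le' tendsto_const_nhds hzero
      (Eventually.of_forall fun N => zero_le) (hM.mono fun N hN => ?_)
    exact (Measure.le_map_apply (hmeas N) _).trans (hgap (hHaar N) hN)
  · filter_upwards [eventually_norm_schurLike_sub_lt hδ hη1 hηε] with N hN
    rintro ω ⟨hω, hgood⟩
    obtain ⟨hO₁, hD₁⟩ := not_not.1 hgood
    exact hN hO₁ hD₁ hω

end OperatorNorm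

/-- If `O₁` is Haar on `SO(T̄)`, `O₂` almost surely has no eigenvalue `−1`, and
`‖O₁ − O₂‖₂ < N^{−1+ε}` with probability tending to one, then, writing the matrices in block
form according to `T̄ = (T̄−N) + N`, also
`‖(A₁ − B₁(1+D₁)⁻¹C₁) − (A₂ − B₂(1+D₂)⁻¹C₂)‖₂ < N^{−1+ε}` with probability tending to one. -/
theorem schur_blocks_match (k : ℕ) (hk : 0 < k) (C₁ C₂ : ℝ) (hC₁ : 0 < C₁) (hC₂ : 0 < C₂)
    (Mdim : ℕ → ℕ)
    (hratio : ∀ N : ℕ, 0 < N →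
      (k + 1 + C₁ : ℝ) ≤ ((Mdim N + N : ℕ) : ℝ) / N ∧ ((Mdim N + N : ℕ) : ℝ) / N ≤ C₂)
    (Ω : ℕ → Type*) (mΩ : ∀ N, MeasurableSpace (Ω N))
    (P : ∀ N, Measure (Ω N)) (hP : ∀ N, IsProbabilityMeasure (P N))
    (O₁ O₂ : ∀ N : ℕ, Ω N → Matrix (Fin (Mdim N) ⊕ Fin N) (Fin (Mdim N) ⊕ Fin N) ℝ)
    (hO₁meas : ∀ N, Measurable (O₁ N))
    (hHaar : ∀ N, IsHaarSO (Fin (Mdim N) ⊕ Fin N) ((P N).map (O₁ N)))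
    (hO₂eig : ∀ N, ∀ᵐ ω ∂P N,
      (-1 : ℂ) ∉ spectrum ℂ ((O₂ N ω).map (algebraMap ℝ ℂ)))
    (hclose : ∀ ε > (0 : ℝ),
      Tendsto (fun N : ℕ => P N {ω | specNorm (O₁ N ω - O₂ N ω) < (N : ℝ) ^ (-1 + ε)})
        atTop (nhds 1)) :
    ∀ ε > (0 : ℝ),
      Tendsto
        (fun N : ℕ =>
          P N {ω | specNorm (schurLike (O₁ N ω) - schurLike (O₂ N ω)) < (N : ℝ) ^ (-1 + ε)})
        atTop (nhds 1) := by
  refine schur_blocks_match_general hC₁ Mdim ?_ Ω P O₁ O₂ hHaar hclose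
  filter_upwards [eventually_gt_atTop 0] with N hN
  have hlow := (le_div_iff₀ (Nat.cast_pos.2 hN)).1 (hratio N hN).1
  push_cast at hlow
  have hkN : (0 : ℝ) ≤ (k - 1) * N :=
    mul_nonneg (sub_nonneg.2 (Nat.one_le_cast.2 hk)) (Nat.cast_nonneg N)
  linarith

end
end
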